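/- arXiv:2603.05973 — 2 statements merged into one kernel-verified Lean document; each statement's English description precedes it below -/
import Mathlib

section
/- Let k ≥ 3 be an integer and let F be a k-graph with π_2(F) = 0. Then F admits a 2-vanishing order. -/
/-!
Contrapositive: if `F` has no `2`-vanishing order, then for infinitely many `n` there is an
`F`-free `k`-graph on `n` vertices whose minimum `2`-degree is at least a constant times
`n ^ (k - 2)`, so `π₂(F) > 0`.

**The construction.** Let `T = |E(F)| + 1`. The vertices are split evenly into finitely many cells,
indexed by the integer points `z ∈ ℤ^T` of a large `ℓ¹`-ball (`Cell`). There are `T` linear orders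
on the vertices: the `t`-th compares first the `t`-th coordinate of the cell, then the index
(`key`). Every ordered pair of distinct vertices gets a label in `[k] × [k]`; a label `(i, j)` on
`(u, v)` announces that `u` is the `i`-th and `v` the `j`-th vertex of an edge, and `(v, u)` then
carries `(j, i)`. An edge is the vertex set of an injective tuple `x₁, …, x_k` whose pairs carry the
right labels and which is monotone, increasing or decreasing, in all of the `T` orders but at most
one (`Good`).

**No copy of `F`** (`vanishing_of_copy`). In a copy of `F` each edge spoils at most one order. As
`T > |E(F)|`, some order `t` is spoiled by none: every edge of the copy is monotone in it. Pulled
back to `V(F)`, this order is `2`-vanishing: the label of a pair gives its positions in the tuple,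
and comparing the label with the order of the two vertices tells whether the tuple is increasing or
decreasing. Hence the positions of the pair inside an edge do not depend on the edge.

**Large degree** (`good_degree`). The labels are random, except that a label which no edge could
carry, given the cells of its two vertices (`Valid`), is replaced by the default that gives
positions `1, 2` to the pair in its index order. Random labels have the extension property of
`exists_coloring`: prescribed labels towards at most `k` given vertices are realized by at least `h`
vertices of any prescribed cell, where `h` is a constant proportion of `n`. So it is enough, for
each pair, to name cells for the remaining `k - 2` vertices. With a valid label these are the cells
witnessing its validity. With a default label they are the cells `z + 2s, z + 3s, …`, where `z` is
the cell of the second vertex and `s ∈ {±1}^T` records in which orders the pair increases. These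
points could leave the ball; but a coordinate `t₀` may be spent, and resetting the largest
coordinate of `z` to `0` brings them back (`Cell.exists_shift`).
-/

open Finset Filter

variable {α : Type*} {β : Type*}

/-- `(V, E)` is a `k`-uniform hypergraph: every edge is a `k`-element subset of `V`. -/
def IsKGraph [DecidableEq α] (k : ℕ) (V : Finset α) (E : Finset (Finset α)) : Prop :=
  ∀ e ∈ E, e ⊆ V ∧ e.card = k

/-- The degree of a vertex set `S`: the number of edges containing `S`. -/
def degS [DecidableEq α] (E : Finset (Finset α)) (S : Finset α) : ℕ :=
  (E.filter fun e => S ⊆ e).card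

/-- The minimum `ℓ`-degree of a hypergraph: the minimum of `degS` over `ℓ`-subsets of `V`. -/
noncomputable def minDeg [DecidableEq α] (ℓ : ℕ) (V : Finset α) (E : Finset (Finset α)) : ℕ :=
  sInf {d | ∃ S ⊆ V, S.card = ℓ ∧ d = degS E S}

/-- The edge set of the link of `S`: `{e \ S : S ⊆ e ∈ E}`. -/
def linkE [DecidableEq α] (E : Finset (Finset α)) (S : Finset α) : Finset (Finset α) :=
  (E.filter fun e => S ⊆ e).image fun e => e \ S

/-- The rank (1-based position) of `x` within `T` with respect to `σ`. -/
def rankIn (T : Finset α) (σ : α → ℕ) (x : α) : ℕ :=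
  (T.filter fun y => σ y ≤ σ x).card

/-- `σ` is an ordering of `V`, i.e. a bijection `V → {1, …, |V|}`. -/
def IsOrdering (V : Finset α) (σ : α → ℕ) : Prop :=
  Set.BijOn σ ↑V (Set.Icc 1 V.card)

/-- `σ` is an `ℓ`-vanishing order of the `k`-graph `(V, E)`: it is an ordering of `V` and there
is a coloring `φ` of `ℓ`-sets of vertices such that for every edge `e` and every `ℓ`-subset `X`
of `e`, `φ X` equals the set of positions that `X` occupies inside `e` under `σ`. -/
def IsVanishingOrder [DecidableEq α] (ℓ : ℕ) (V : Finset α) (E : Finset (Finset α))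
    (σ : α → ℕ) : Prop :=
  IsOrdering V σ ∧
    ∃ φ : Finset α → Finset ℕ,
      ∀ e ∈ E, ∀ X ⊆ e, X.card = ℓ → φ X = X.image (rankIn e σ)

/-- The hypergraph `(VH, EH)` contains a copy of `(VF, EF)`. -/
def ContainsCopy [DecidableEq α] [DecidableEq β] (VF : Finset α) (EF : Finset (Finset α))
    (VH : Finset β) (EH : Finset (Finset β)) : Prop :=
  ∃ f : α → β, Set.InjOn f ↑VF ∧ (∀ v ∈ VF, f v ∈ VH) ∧ ∀ e ∈ EF, e.image f ∈ EH

/-- `ex_ℓ(n, F)`: the maximum of `δ_ℓ(H)` over all `F`-free `k`-graphs `H` on `n` vertices. -/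
noncomputable def exDeg [DecidableEq α] (k ℓ n : ℕ) (VF : Finset α)
    (EF : Finset (Finset α)) : ℕ :=
  sSup {d | ∃ E : Finset (Finset (Fin n)), (∀ e ∈ E, e.card = k) ∧
    ¬ ContainsCopy VF EF (Finset.univ : Finset (Fin n)) E ∧ d = minDeg ℓ Finset.univ E}

/-- The `ℓ`-degree Turán density of the `k`-graph `F = (VF, EF)` equals `x`, i.e.
`ex_ℓ(n, F) / C(n-ℓ, k-ℓ) → x` as `n → ∞` (this limit is known to exist). -/
def HasTuranDensity [DecidableEq α] (k ℓ : ℕ) (VF : Finset α) (EF : Finset (Finset α))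
    (x : ℝ) : Prop :=
  Tendsto (fun n : ℕ => (exDeg k ℓ n VF EF : ℝ) / ((n - ℓ).choose (k - ℓ) : ℝ)) atTop (nhds x)

/-- The `t`-uniform hypergraph `(V, E)` is `t`-partite: the vertices can be split into `t`
parts so that every edge contains exactly one vertex from each part. -/
def IsPartite (t : ℕ) (V : Finset α) (E : Finset (Finset α)) : Prop :=
  ∃ P : α → Fin t, ∀ e ∈ E, ∀ i : Fin t, (e.filter fun v => P v = i).card = 1

/-! ### Random labels with the extension property -/

/-- For a uniformly random `g : W → W → Γ`, let `X` be the number of `x ∈ L` such that the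
symmetrized value `g x s + sw (g s x)` equals `a s` for all `s ∈ S`. The expectation of `2 ^ (-X)`
is exactly that of a binomial variable: adding `sw (g s x)` to `g x s` is a bijective shear of the
functions `g`, as `x ∉ S`, after which the events for different `x` are independent. -/
lemma sum_half_pow {W Γ : Type*} [Fintype W] [DecidableEq W] [Fintype Γ] [DecidableEq Γ]
    [AddCommGroup Γ] (sw : Γ → Γ) (S L : Finset W) (hd : Disjoint L S) (a : W → Γ) :
    ∑ g : W → W → Γ,
        (1 / 2 : ℝ) ^ (L.filter fun x => ∀ s ∈ S, g x s + sw (g s x) = a s).card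
      = (Fintype.card (W → W → Γ) : ℝ)
        * (1 - 1 / (2 * (Fintype.card Γ : ℝ) ^ S.card)) ^ L.card := by
  classical
  let shear : (W → W → Γ) ≃ (W → W → Γ) :=
    { toFun := fun g x s => if x ∉ S ∧ s ∈ S then g x s + sw (g s x) else g x s
      invFun := fun g x s => if x ∉ S ∧ s ∈ S then g x s - sw (g s x) else g x s
      left_inv := by
        intro g; funext x s
        by_cases hx : x ∈ S <;> by_cases hs : s ∈ S <;> simp [hx, hs]
      right_inv := by
        intro g; funext x s
        by_cases hx : x ∈ S <;> by_cases hs : s ∈ S <;> simp [hx, hs] }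
  -- the weight of a vertex depends only on its own row of the sheared function
  let w : W → (W → Γ) → ℝ := fun x h => if x ∈ L ∧ ∀ s ∈ S, h s = a s then 1 / 2 else 1
  have h1 : ∀ g : W → W → Γ,
      (1 / 2 : ℝ) ^ (L.filter fun x => ∀ s ∈ S, g x s + sw (g s x) = a s).card
        = ∏ x, w x (shear g x) := by
    intro g
    have : ∀ x, w x (shear g x) =
        if x ∈ L.filter (fun x => ∀ s ∈ S, g x s + sw (g s x) = a s) then (1 / 2 : ℝ) else 1 := by
      intro x
      simp only [w, mem_filter]
      refine if_congr ?_ rfl rfl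
      refine and_congr_right fun hx => forall₂_congr fun s hs => ?_
      have hxS : x ∉ S := Finset.disjoint_left.1 hd hx
      simp [shear, hxS, hs]
    simp only [this]
    rw [Finset.prod_ite_mem]
    simp
  have h2 : ∀ x, ∑ h : W → Γ, w x h =
      (Fintype.card (W → Γ) : ℝ) *
        (if x ∈ L then (1 - 1 / (2 * (Fintype.card Γ : ℝ) ^ S.card)) else 1) := by
    intro x
    by_cases hx : x ∈ L
    · have hcard : ((univ.filter fun h : W → Γ => ∀ s ∈ S, h s = a s).card : ℝ)
          * (Fintype.card Γ : ℝ) ^ S.card = Fintype.card (W → Γ) := by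
        have : (univ.filter fun h : W → Γ => ∀ s ∈ S, h s = a s)
            = Fintype.piFinset (fun s => if s ∈ S then {a s} else univ) := by
          ext h
          simp only [mem_filter, mem_univ, true_and, Fintype.mem_piFinset]
          refine forall_congr' fun s => ?_
          by_cases hs : s ∈ S <;> simp [hs]
        rw [this, Fintype.card_piFinset]
        have h3 : ∀ s, (if s ∈ S then ({a s} : Finset Γ) else univ).card
            = if s ∈ S then 1 else Fintype.card Γ := by
          intro s; by_cases hs : s ∈ S <;> simp [hs]
        simp only [h3]
        have h4 : (∏ s : W, if s ∈ S then 1 else Fintype.card Γ)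
            * Fintype.card Γ ^ S.card = Fintype.card (W → Γ) := by
          rw [Fintype.card_fun, ← Finset.card_univ (α := W), ← Finset.prod_const,
            ← Finset.prod_const, ← Finset.prod_ite_mem_eq S, ← Finset.prod_mul_distrib]
          refine Finset.prod_congr rfl fun s _ => ?_
          by_cases hs : s ∈ S <;> simp [hs]
        exact_mod_cast h4
      have hpos : (0 : ℝ) < (Fintype.card Γ : ℝ) ^ S.card := by
        have : 0 < Fintype.card Γ := Fintype.card_pos
        positivity
      have : ∀ h : W → Γ, w x h = 1 - 1 / 2 * (if ∀ s ∈ S, h s = a s then 1 else 0) := by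
        intro h
        by_cases hh : ∀ s ∈ S, h s = a s
        · simp only [w, hx, true_and, if_pos hh]; norm_num
        · simp only [w, hx, true_and, if_neg hh]; norm_num
      simp only [this, hx, if_true]
      rw [Finset.sum_sub_distrib, ← Finset.mul_sum, Finset.sum_boole, ← hcard]
      simp only [sum_const, card_univ, nsmul_eq_mul, mul_one]
      rw [← hcard]
      field_simp
    · simp [w, hx]
  simp only [h1]
  rw [Equiv.sum_comp shear (fun g => ∏ x, w x (g x))]
  have h5 := Finset.prod_univ_sum (fun _ : W => (univ : Finset (W → Γ))) w
  rw [Fintype.piFinset_univ] at h5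
  rw [← h5]
  simp only [h2]
  rw [Finset.prod_mul_distrib, Finset.prod_const, Finset.prod_ite_mem]
  simp

/-- Extension property: for suitable `g`, any prescribed values of `g x y + sw (g y x)` for `y` in a
set of at most `k` vertices are realized by at least `h` vertices `x` of any cell, as soon as the
cells have size at least `w * h`. The constant `w` does not depend on `h`, so `h` is a constant
proportion of the number of vertices. The proof is a union bound over the `h ^ O(1)` prescriptions,
each of which fails with probability exponentially small in `h` by `sum_half_pow`. -/
lemma exists_coloring (k : ℕ) (κ Γ : Type) [Fintype κ] [DecidableEq κ] [Fintype Γ]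
    [DecidableEq Γ] [AddCommGroup Γ] (sw : Γ → Γ) :
    ∃ w : ℕ, 0 < w ∧ ∀ᶠ h : ℕ in atTop,
      ∀ cell : Fin (Fintype.card κ * (w * h)) → κ,
        (∀ c, w * h ≤ (univ.filter fun x => cell x = c).card) →
        ∃ g : Fin (Fintype.card κ * (w * h)) → Fin (Fintype.card κ * (w * h)) → Γ,
          ∀ (y : Fin k → Fin (Fintype.card κ * (w * h))) (I : Finset (Fin k)) (a : Fin k → Γ)
            (c : κ), Set.InjOn y I →
            h ≤ (univ.filter fun x => cell x = c ∧ x ∉ I.image y ∧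
              ∀ m ∈ I, g x (y m) + sw (g (y m) x) = a m).card := by
  classical
  set q : ℝ := (Fintype.card Γ : ℝ) with hq
  have hq1 : 1 ≤ q := by
    have : 0 < Fintype.card Γ := Fintype.card_pos
    rw [hq]; exact_mod_cast this
  set ρ : ℝ := 1 - 1 / (2 * q ^ k) with hρ
  have hqk : 1 ≤ q ^ k := one_le_pow₀ hq1
  have hρ0 : 0 < ρ := by
    have : 1 / (2 * q ^ k) < 1 := by rw [div_lt_one (by positivity)]; linarith
    linarith
  have hρ1 : ρ < 1 := by
    have : 0 < 1 / (2 * q ^ k) := by positivity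
    linarith
  -- the expectation of `2 ^ (-X)` is about `ρ ^ (w * h)`, and Markov's inequality costs a factor
  -- `2 ^ h`; with `ρ ^ w < 1 / 4` a factor `2 ^ (-h)` is left
  obtain ⟨w, hw⟩ := exists_pow_lt_of_lt_one (show (0 : ℝ) < 1 / 4 by norm_num) hρ1
  have hw0 : 0 < w := by
    rcases Nat.eq_zero_or_pos w with rfl | h
    · norm_num at hw
    · exact h
  refine ⟨w, hw0, ?_⟩
  set N := Fintype.card κ
  have hlim := tendsto_pow_const_mul_const_pow_of_abs_lt_one k
    (show |(1 / 2 : ℝ)| < 1 by rw [abs_of_pos] <;> norm_num)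
  have hlim2 := hlim.const_mul
    ((N * w : ℝ) ^ k * 2 ^ k * q ^ k * N / ρ ^ k)
  rw [mul_zero] at hlim2
  filter_upwards [hlim2.eventually (gt_mem_nhds (show (0 : ℝ) < 1 by norm_num))] with h hh
  generalize hn : N * (w * h) = n
  intro cell hcell
  by_contra hcon
  push Not at hcon
  -- `Idx` lists the prescriptions, and `bad p` is the set of `g` that violate `p`
  let Idx := (Fin k → Fin n) × Finset (Fin k) × (Fin k → Γ) × κ
  let X : (Fin n → Fin n → Γ) → Idx → Finset (Fin n) := fun g p =>
    univ.filter fun x => cell x = p.2.2.2 ∧ x ∉ p.2.1.image p.1 ∧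
              ∀ m ∈ p.2.1, g x (p.1 m) + sw (g (p.1 m) x) = p.2.2.1 m
  let bad : Idx → Finset (Fin n → Fin n → Γ) := fun p =>
    univ.filter fun g => Set.InjOn p.1 p.2.1 ∧ (X g p).card < h
  have hbad : ∀ p : Idx, ((bad p).card : ℝ) ≤
      (Fintype.card (Fin n → Fin n → Γ) : ℝ) * ((1 / 2) ^ h / ρ ^ k) := by
    rintro ⟨y, I, a, c⟩
    by_cases hinj : Set.InjOn y I
    swap
    · have : bad (y, I, a, c) = ∅ := by
        simp [bad, hinj]
      rw [this]; simp; positivity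
    set S := I.image y with hS
    set L := univ.filter (fun x => cell x = c) \ S with hL
    have hdis : Disjoint L S := Finset.sdiff_disjoint
    -- as `y` is injective on `I`, the prescription is a function of the vertices
    have hex : ∃ a' : Fin n → Γ, ∀ m ∈ I, a' (y m) = a m := by
      refine ⟨fun s => if hs : ∃ m ∈ I, y m = s then a hs.choose else 0, fun m hm => ?_⟩
      have hs : ∃ m' ∈ I, y m' = y m := ⟨m, hm, rfl⟩
      have := hinj (hs.choose_spec.1) hm hs.choose_spec.2
      simp only [hs, dif_pos, this]
    obtain ⟨a', ha'⟩ := hex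
    have hXeq : ∀ g, X g (y, I, a, c)
        = L.filter fun x => ∀ s ∈ S, g x s + sw (g s x) = a' s := by
      intro g
      ext x
      simp only [X, hL, hS, mem_filter, mem_univ, true_and, Finset.mem_sdiff, forall_mem_image,
        and_assoc]
      refine and_congr_right fun _ => and_congr_right fun _ => ?_
      exact forall₂_congr fun m hm => by rw [ha' m hm]
    have hsum : ∑ g : Fin n → Fin n → Γ, (1 / 2 : ℝ) ^
          (L.filter fun x => ∀ s ∈ S, g x s + sw (g s x) = a' s).card
        = (Fintype.card (Fin n → Fin n → Γ) : ℝ)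
          * (1 - 1 / (2 * (Fintype.card Γ : ℝ) ^ S.card)) ^ L.card := by
      convert sum_half_pow sw S L hdis a'
    have hSk : S.card ≤ k := by
      calc S.card ≤ I.card := card_image_le
        _ ≤ k := by simpa using card_le_univ I
    have hLk : w * h ≤ L.card + k := by
      have h1 := hcell c
      have h2 := Finset.le_card_sdiff S (univ.filter (fun x => cell x = c))
      rw [← hL] at h2
      omega
    have hbase : 1 - 1 / (2 * (Fintype.card Γ : ℝ) ^ S.card) ≤ ρ := by
      rw [hρ, ← hq]
      have : q ^ S.card ≤ q ^ k := pow_le_pow_right₀ hq1 hSk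
      have h0 : 0 < q ^ S.card := by positivity
      gcongr
    have hbase0 : 0 ≤ 1 - 1 / (2 * (Fintype.card Γ : ℝ) ^ S.card) := by
      rw [← hq]
      have : 1 ≤ q ^ S.card := one_le_pow₀ hq1
      have : 1 / (2 * q ^ S.card) ≤ 1 := by rw [div_le_one (by positivity)]; linarith
      linarith
    have hlow : ((bad (y, I, a, c)).card : ℝ) * (1 / 2) ^ h ≤
        (Fintype.card (Fin n → Fin n → Γ) : ℝ) * ρ ^ L.card := by
      calc ((bad (y, I, a, c)).card : ℝ) * (1 / 2) ^ h
          = ∑ g ∈ bad (y, I, a, c), (1 / 2 : ℝ) ^ h := by rw [sum_const, nsmul_eq_mul]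
        _ ≤ ∑ g ∈ bad (y, I, a, c), (1 / 2 : ℝ) ^
              (L.filter fun x => ∀ s ∈ S, g x s + sw (g s x) = a' s).card := by
            refine sum_le_sum fun g hg => ?_
            simp only [bad, mem_filter, mem_univ, true_and, hXeq] at hg
            exact pow_le_pow_of_le_one (by norm_num) (by norm_num) hg.2.le
        _ ≤ ∑ g : Fin n → Fin n → Γ, (1 / 2 : ℝ) ^
              (L.filter fun x => ∀ s ∈ S, g x s + sw (g s x) = a' s).card :=
            sum_le_sum_of_subset_of_nonneg (subset_univ _) (fun _ _ _ => by positivity)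
        _ ≤ _ := by
            rw [hsum]; gcongr
    have hρL : ρ ^ L.card ≤ (1 / 4) ^ h / ρ ^ k := by
      rw [le_div_iff₀ (by positivity), ← pow_add]
      calc ρ ^ (L.card + k) ≤ ρ ^ (w * h) := pow_le_pow_of_le_one hρ0.le hρ1.le hLk
        _ = (ρ ^ w) ^ h := pow_mul _ _ _
        _ ≤ _ := pow_le_pow_left₀ (by positivity) hw.le _
    have h14 : (1 / 4 : ℝ) ^ h = (1 / 2) ^ h * (1 / 2) ^ h := by
      rw [← mul_pow]; norm_num
    have hhalf : (0 : ℝ) < (1 / 2) ^ h := by positivity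
    refine le_of_mul_le_mul_right (hlow.trans ?_) hhalf
    calc (Fintype.card (Fin n → Fin n → Γ) : ℝ) * ρ ^ L.card
        ≤ (Fintype.card (Fin n → Fin n → Γ) : ℝ) * ((1 / 4) ^ h / ρ ^ k) := by gcongr
      _ = _ := by rw [h14]; ring
  have hcover : (univ : Finset (Fin n → Fin n → Γ)) ⊆ (univ : Finset Idx).biUnion bad := by
    intro g _
    obtain ⟨y, I, a, c, h1, h2⟩ := hcon g
    simp only [mem_biUnion, mem_univ, true_and]
    refine ⟨(y, I, a, c), ?_⟩
    simp only [bad, X, mem_filter, mem_univ, true_and]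
    exact ⟨h1, h2⟩
  have hG : (0 : ℝ) < Fintype.card (Fin n → Fin n → Γ) := by
    exact_mod_cast Fintype.card_pos
  have hIdx : (Fintype.card Idx : ℝ) = (N * w * h : ℝ) ^ k * 2 ^ k * q ^ k * N := by
    simp only [Idx, Fintype.card_prod, Fintype.card_fun, Fintype.card_fin, Fintype.card_finset,
      ← hn, hq]
    push_cast
    ring
  have hfin : (Fintype.card (Fin n → Fin n → Γ) : ℝ) ≤
      Fintype.card Idx * ((Fintype.card (Fin n → Fin n → Γ) : ℝ) * ((1 / 2) ^ h / ρ ^ k)) := by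
    calc (Fintype.card (Fin n → Fin n → Γ) : ℝ)
        ≤ (((univ : Finset Idx).biUnion bad).card : ℝ) := by
          exact_mod_cast card_le_card hcover
      _ ≤ ((∑ p : Idx, (bad p).card : ℕ) : ℝ) := by exact_mod_cast card_biUnion_le
      _ = ∑ p : Idx, ((bad p).card : ℝ) := by push_cast; rfl
      _ ≤ ∑ p : Idx, _ := sum_le_sum fun p _ => hbad p
      _ = _ := by rw [sum_const, nsmul_eq_mul, card_univ]
  rw [hIdx] at hfin
  have : (Fintype.card (Fin n → Fin n → Γ) : ℝ) *
      ((N * w : ℝ) ^ k * 2 ^ k * q ^ k * N / ρ ^ k * ((h : ℝ) ^ k * (1 / 2) ^ h))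
      < Fintype.card (Fin n → Fin n → Γ) * 1 := mul_lt_mul_of_pos_left hh hG
  have heq : (N * w * h : ℝ) ^ k * 2 ^ k * q ^ k * N *
      ((Fintype.card (Fin n → Fin n → Γ) : ℝ) * ((1 / 2) ^ h / ρ ^ k))
      = (Fintype.card (Fin n → Fin n → Γ) : ℝ) *
      ((N * w : ℝ) ^ k * 2 ^ k * q ^ k * N / ρ ^ k * ((h : ℝ) ^ k * (1 / 2) ^ h)) := by
    rw [mul_pow (N * w : ℝ) (h : ℝ)]; ring
  linarith

/-! ### Cells -/

/-- The integer points of the `ℓ¹`-ball of radius `C` in `ℝ^T`. The coordinates are taken in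
`[-C, C]`, which loses nothing and makes finiteness immediate. -/
def Cell (T C : ℕ) : Type :=
  {z : Fin T → Finset.Icc (-(C : ℤ)) C // ∑ t, |(z t : ℤ)| ≤ C}

instance (T C : ℕ) : DecidableEq (Cell T C) := by unfold Cell; infer_instance
noncomputable instance (T C : ℕ) : Fintype (Cell T C) := by unfold Cell; infer_instance

/-- The `t`-th coordinate of a cell, as an integer. -/
def Cell.co {T C : ℕ} (z : Cell T C) (t : Fin T) : ℤ := (z.1 t : ℤ)

lemma Cell.exists_of_sum_le {T C : ℕ} (f : Fin T → ℤ) (hf : ∑ t, |f t| ≤ C) :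
    ∃ z : Cell T C, ∀ t, z.co t = f t := by
  have h : ∀ t, f t ∈ Finset.Icc (-(C : ℤ)) C := by
    intro t
    have := Finset.single_le_sum (f := fun t => |f t|) (fun i _ => abs_nonneg _) (mem_univ t)
    rw [Finset.mem_Icc, ← abs_le]
    exact this.trans hf
  exact ⟨⟨fun t => ⟨f t, h t⟩, hf⟩, fun t => rfl⟩

/-- A cell `z` can be moved up to `k` steps in any sign direction `s` without leaving the ball, if
one coordinate `t₀`, depending only on `z`, is given up. Here `t₀` is where `|z|` is largest, and
that coordinate is reset to `0`: this gains `|z t₀|`, which pays for the at most `k * T` added by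
the move if `k * T ≤ |z t₀|`; otherwise `z` is at distance at least `k * T` from the boundary. -/
lemma Cell.exists_shift {k T : ℕ} (hT : 0 < T) (z : Cell T (k * T * (T + 1))) :
    ∃ t₀ : Fin T, ∀ s : Fin T → ℤ, (∀ t, |s t| ≤ 1) → ∀ a : ℤ, |a| ≤ k →
      ∃ r : Cell T (k * T * (T + 1)), ∀ t, t ≠ t₀ → r.co t = z.co t + a * s t := by
  have : Nonempty (Fin T) := ⟨⟨0, hT⟩⟩
  obtain ⟨t₀, -, ht₀⟩ := Finset.exists_max_image univ (fun t => |z.co t|) univ_nonempty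
  refine ⟨t₀, fun s hs a ha => ?_⟩
  have hz : ∑ t, |z.co t| ≤ ((k * T * (T + 1) : ℕ) : ℤ) := z.2
  have hmax : ∑ t, |z.co t| ≤ T * |z.co t₀| := by
    calc ∑ t, |z.co t| ≤ ∑ _t : Fin T, |z.co t₀| := sum_le_sum fun t ht => ht₀ t ht
      _ = _ := by simp
  have hstep : ∀ t, |a * s t| ≤ k := by
    intro t
    rw [abs_mul]
    calc |a| * |s t| ≤ |a| * 1 := by gcongr; exact hs t
      _ ≤ k := by rw [mul_one]; exact ha
  have hsum : ∑ t, |if t = t₀ then 0 else z.co t + a * s t|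
      ≤ ∑ t, |z.co t| - |z.co t₀| + k * T := by
    calc ∑ t, |if t = t₀ then 0 else z.co t + a * s t|
        ≤ ∑ t, ((|z.co t| - if t = t₀ then |z.co t| else 0) + k) := by
          refine sum_le_sum fun t _ => ?_
          by_cases h : t = t₀
          · simp [h]
          · simp only [h, if_false, sub_zero]
            exact (abs_add_le _ _).trans (add_le_add_right (hstep t) _)
      _ = _ := by
          rw [sum_add_distrib, sum_sub_distrib]
          simp [mul_comm]
  obtain ⟨r, hr⟩ := Cell.exists_of_sum_le (C := k * T * (T + 1))
    (fun t => if t = t₀ then 0 else z.co t + a * s t) (by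
      refine hsum.trans ?_
      push_cast at hz ⊢
      have hT' : (0 : ℤ) < T := by exact_mod_cast hT
      by_cases hc : (k * T : ℤ) ≤ |z.co t₀|
      · linarith
      · push Not at hc
        have : (T : ℤ) * |z.co t₀| ≤ T * (k * T) := by gcongr
        have h0 := abs_nonneg (z.co t₀)
        nlinarith)
  refine ⟨r, fun t ht => ?_⟩
  rw [hr t, if_neg ht]

/-! ### Greedy extension to tuples -/

/-- Given the vertices at the positions `I₀`, the positions `J` can be filled in at least
`h ^ |J|` ways with new vertices in the prescribed cells `C l`, such that every pair that involves
a new vertex carries the label formed by its positions, at least in one of its two directions. -/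
lemma card_tuples {k h : ℕ} {V κ : Type*} [Fintype V] [DecidableEq V] [DecidableEq κ]
    (cell : V → κ)
    (raw : V → V → Fin k × Fin k)
    (hext : ∀ (y : Fin k → V) (I : Finset (Fin k)) (a : Fin k → Fin k × Fin k) (c : κ),
      Set.InjOn y I → h ≤ (univ.filter fun x => cell x = c ∧ x ∉ I.image y ∧
              ∀ m ∈ I, raw x (y m) = a m).card)
    (C : Fin k → κ) (I₀ : Finset (Fin k)) (y₀ : Fin k → V) (hy₀ : Set.InjOn y₀ I₀)
    (J : Finset (Fin k)) (hJ : Disjoint J I₀) :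
    h ^ J.card ≤ (univ.filter fun y : Fin k → V =>
      (∀ l, l ∉ J → y l = y₀ l) ∧ Set.InjOn y ↑(I₀ ∪ J) ∧ (∀ l ∈ J, cell (y l) = C l) ∧
      (∀ l ∈ I₀ ∪ J, ∀ m ∈ I₀ ∪ J, l ≠ m → (l ∈ J ∨ m ∈ J) →
        raw (y l) (y m) = (l, m) ∨ raw (y m) (y l) = (m, l))).card := by
  classical
  induction J using Finset.induction_on with
  | empty =>
    rw [card_empty, pow_zero, Nat.one_le_iff_ne_zero, ← Nat.pos_iff_ne_zero, card_pos]
    exact ⟨y₀, by simp [hy₀]⟩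
  | insert l J hl ih =>
    have hJ' : Disjoint J I₀ := hJ.mono_left (subset_insert _ _)
    have hlI : l ∉ I₀ := Finset.disjoint_left.1 hJ (mem_insert_self _ _)
    have ih := ih hJ'
    set P := (univ.filter fun y : Fin k → V =>
      (∀ l, l ∉ J → y l = y₀ l) ∧ Set.InjOn y ↑(I₀ ∪ J) ∧ (∀ l ∈ J, cell (y l) = C l) ∧
      (∀ l ∈ I₀ ∪ J, ∀ m ∈ I₀ ∪ J, l ≠ m → (l ∈ J ∨ m ∈ J) →
        raw (y l) (y m) = (l, m) ∨ raw (y m) (y l) = (m, l))) with hP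
    let X : (Fin k → V) → Finset V := fun y =>
      univ.filter fun x => cell x = C l ∧ x ∉ (I₀ ∪ J).image y ∧
              ∀ m ∈ I₀ ∪ J, raw x (y m) = (l, m)
    have hX : ∀ y ∈ P, h ≤ (X y).card := fun y hy =>
      hext y (I₀ ∪ J) (fun m => (l, m)) (C l) (mem_filter.1 hy).2.2.1
    have hcard : h ^ (insert l J).card ≤ (P.sigma X).card := by
      rw [card_insert_of_notMem hl, pow_succ, card_sigma]
      calc h ^ J.card * h ≤ P.card * h := by gcongr
        _ = ∑ _y ∈ P, h := by simp
        _ ≤ _ := sum_le_sum hX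
    refine hcard.trans (card_le_card_of_injOn (fun p => Function.update p.1 l p.2) ?_ ?_)
    · rintro ⟨y, x⟩ hyx
      simp only [coe_sigma, Set.mem_sigma_iff, mem_coe] at hyx
      obtain ⟨hy, hx⟩ := hyx
      simp only [hP, mem_filter, mem_univ, true_and] at hy
      simp only [X, mem_filter, mem_univ, true_and] at hx
      obtain ⟨hy1, hy2, hy3, hy4⟩ := hy
      obtain ⟨hx1, hx2, hx3⟩ := hx
      have hne : ∀ m ∈ I₀ ∪ J, m ≠ l := by
        rintro m hm rfl
        rcases mem_union.1 hm with h | h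
        exacts [hlI h, hl h]
      have hxm : ∀ m ∈ I₀ ∪ J, y m ≠ x := fun m hm h => hx2 (mem_image.2 ⟨m, hm, h⟩)
      simp only [coe_filter, mem_univ, true_and, Set.mem_ofPred_eq, union_insert]
      refine ⟨?_, ?_, ?_, ?_⟩
      · intro m hm
        rw [mem_insert, not_or] at hm
        rw [Function.update_of_ne hm.1, hy1 m hm.2]
      · intro m hm m' hm' hmm
        rw [mem_coe, mem_insert] at hm hm'
        rcases hm with rfl | hm <;> rcases hm' with rfl | hm'
        · rfl
        · rw [Function.update_self, Function.update_of_ne (hne _ hm')] at hmm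
          exact absurd hmm.symm (hxm _ hm')
        · rw [Function.update_self, Function.update_of_ne (hne _ hm)] at hmm
          exact absurd hmm (hxm _ hm)
        · rw [Function.update_of_ne (hne _ hm), Function.update_of_ne (hne _ hm')] at hmm
          exact hy2 hm hm' hmm
      · intro m hm
        rcases mem_insert.1 hm with rfl | hm
        · rw [Function.update_self, hx1]
        · rw [Function.update_of_ne (hne m (mem_union_right _ hm)), hy3 m hm]
      · intro m hm m' hm' hmm hor
        rw [mem_insert] at hm hm'
        rcases hm with rfl | hm <;> rcases hm' with rfl | hm'
        · exact absurd rfl hmm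
        · rw [Function.update_self, Function.update_of_ne (hne _ hm')]
          exact Or.inl (hx3 _ hm')
        · rw [Function.update_self, Function.update_of_ne (hne _ hm)]
          exact Or.inr (hx3 _ hm)
        · rw [Function.update_of_ne (hne _ hm), Function.update_of_ne (hne _ hm')]
          refine hy4 m hm m' hm' hmm ?_
          rcases hor with h | h
          · exact Or.inl ((mem_insert.1 h).resolve_left (hne _ hm))
          · exact Or.inr ((mem_insert.1 h).resolve_left (hne _ hm'))
    · rintro ⟨y, x⟩ hy ⟨y', x'⟩ hy' heq
      simp only [coe_sigma, Set.mem_sigma_iff, mem_coe, hP, mem_filter, mem_univ, true_and] at hy hy'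
      simp only at heq
      have hxx : x = x' := by
        have := congrFun heq l
        simpa using this
      have hyy : y = y' := by
        funext m
        by_cases hm : m = l
        · subst hm; rw [hy.1.1 m hl, hy'.1.1 m hl]
        · have := congrFun heq m
          simpa [Function.update_of_ne hm] using this
      subst hxx; subst hyy; rfl

/-! ### Orders, labels and edges -/

/-- The tuple of cells `C` is strictly monotone or strictly antitone in every coordinate, with at
most one exception. -/
def Strict {k T D : ℕ} (C : Fin k → Cell T D) : Prop :=
  ∃ t₀ : Fin T, ∀ t, t ≠ t₀ → StrictMono (fun l => (C l).co t) ∨ StrictAnti (fun l => (C l).co t)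

/-- The label `p` is possible for a pair of vertices in the cells `c` and `c'`: some `Strict` tuple
of cells has `c` and `c'` at the two positions named by `p`. -/
def Valid {k T D : ℕ} (c c' : Cell T D) (p : Fin k × Fin k) : Prop :=
  p.1 ≠ p.2 ∧ ∃ C : Fin k → Cell T D, Strict C ∧ C p.1 = c ∧ C p.2 = c'

lemma Valid.swap {k T D : ℕ} {c c' : Cell T D} {p : Fin k × Fin k} (h : Valid c c' p) :
    Valid c' c p.swap := by
  obtain ⟨h1, C, h2, h3, h4⟩ := h
  exact ⟨h1.symm, C, h2, h4, h3⟩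

lemma Strict.valid {k T D : ℕ} {C : Fin k → Cell T D} (h : Strict C) {l m : Fin k} (hlm : l ≠ m) :
    Valid (C l) (C m) (l, m) := ⟨hlm, C, h, rfl, rfl⟩

/-- The rank of `u` in the `t`-th order. As vertices are numbered below `n`, this integer encodes
the lexicographic order by the `t`-th coordinate of the cell and then by the index. -/
def key {n T D : ℕ} (cell : Fin n → Cell T D) (t : Fin T) (u : Fin n) : ℤ :=
  (cell u).co t * n + (u : ℕ)

lemma key_lt_of_co_lt {n T D : ℕ} {cell : Fin n → Cell T D} {t : Fin T} {u v : Fin n}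
    (h : (cell u).co t < (cell v).co t) : key cell t u < key cell t v := by
  unfold key
  have hu := u.2
  have h1 : ((cell u).co t + 1) * (n : ℤ) ≤ (cell v).co t * n := by gcongr; exact h
  have h2 : ((u : ℕ) : ℤ) < n := by exact_mod_cast hu
  have h3 : (0 : ℤ) ≤ ((v : ℕ) : ℤ) := by positivity
  linarith

lemma co_le_of_key_lt {n T D : ℕ} {cell : Fin n → Cell T D} {t : Fin T} {u v : Fin n}
    (h : key cell t u < key cell t v) : (cell u).co t ≤ (cell v).co t := by
  by_contra hc
  exact absurd (key_lt_of_co_lt (not_le.1 hc)) h.not_gt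

lemma key_injective {n T D : ℕ} (cell : Fin n → Cell T D) (t : Fin T) :
    Function.Injective (key cell t) := by
  intro u v h
  have hco : (cell u).co t = (cell v).co t := by
    rcases lt_trichotomy ((cell u).co t) ((cell v).co t) with h' | h' | h'
    · exact absurd h (key_lt_of_co_lt h').ne
    · exact h'
    · exact absurd h (key_lt_of_co_lt h').ne'
  unfold key at h
  rw [hco] at h
  apply Fin.ext
  have := add_left_cancel h
  exact_mod_cast this

open Classical in
/-- The label of `(u, v)`: the raw label if it is `Valid` for the two cells, and otherwise the
default label which puts the vertex of smaller index at position `a` and the other at `b`. -/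
noncomputable def label {n k T D : ℕ} (cell : Fin n → Cell T D)
    (raw : Fin n → Fin n → Fin k × Fin k) (a b : Fin k) (u v : Fin n) : Fin k × Fin k :=
  if Valid (cell u) (cell v) (raw u v) then raw u v else if u < v then (a, b) else (b, a)

lemma label_swap {n k T D : ℕ} {cell : Fin n → Cell T D}
    {raw : Fin n → Fin n → Fin k × Fin k} (hraw : ∀ u v, raw v u = (raw u v).swap)
    {a b : Fin k} {u v : Fin n} (huv : u ≠ v) :
    label cell raw a b v u = (label cell raw a b u v).swap := by
  unfold label
  by_cases h : Valid (cell u) (cell v) (raw u v)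
  · have h' : Valid (cell v) (cell u) (raw v u) := by rw [hraw]; exact h.swap
    rw [if_pos h, if_pos h', hraw]
  · have h' : ¬ Valid (cell v) (cell u) (raw v u) := by
      intro h'
      apply h
      rw [hraw v u]; exact h'.swap
    rw [if_neg h, if_neg h']
    rcases lt_or_gt_of_ne huv with h1 | h1
    · rw [if_pos h1, if_neg h1.not_gt]; rfl
    · rw [if_pos h1, if_neg h1.not_gt]; rfl

lemma label_of_valid {n k T D : ℕ} {cell : Fin n → Cell T D}
    {raw : Fin n → Fin n → Fin k × Fin k} {a b : Fin k} {u v : Fin n} {p : Fin k × Fin k}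
    (h : raw u v = p) (hv : Valid (cell u) (cell v) p) :
    label cell raw a b u v = p := by
  unfold label
  rw [h, if_pos hv]

/-- The tuple `x` spans an edge: it is injective, all its pairs are labelled by their positions, and
it is increasing or decreasing in each of the `T` orders with at most one exception. -/
def Good {n k T D : ℕ} (cell : Fin n → Cell T D)
    (lab : Fin n → Fin n → Fin k × Fin k) (x : Fin k → Fin n) : Prop :=
  Function.Injective x ∧ (∀ l m, l ≠ m → lab (x l) (x m) = (l, m)) ∧
    ∃ t₀ : Fin T, ∀ t, t ≠ t₀ →
      StrictMono (fun l => key cell t (x l)) ∨ StrictAnti (fun l => key cell t (x l))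

open Classical in
/-- The hypergraph formed by the vertex sets of all `Good` tuples. -/
noncomputable def goodEdges {n k T D : ℕ} (cell : Fin n → Cell T D)
    (lab : Fin n → Fin n → Fin k × Fin k) : Finset (Finset (Fin n)) :=
  (univ.filter (Good cell lab)).image fun x => univ.image x

/-! ### Every pair lies in many edges -/

/-- A pair `u, v` lies in at least `h ^ (k - 2)` edges if it can be put at positions `i, j` so that
every completion with the other vertices in the cells `C l` and the right raw labels is `Good`. The
labels of the pairs containing `u` determine the tuple from its edge, so tuples may be counted
instead of edges. -/
lemma pow_le_degS {n k T D h : ℕ} (cell : Fin n → Cell T D)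
    (raw lab : Fin n → Fin n → Fin k × Fin k) (hraw : ∀ u v, raw v u = (raw u v).swap)
    (hext : ∀ (y : Fin k → Fin n) (I : Finset (Fin k)) (a : Fin k → Fin k × Fin k) (c : Cell T D),
      Set.InjOn y I → h ≤ (univ.filter fun x => cell x = c ∧ x ∉ I.image y ∧
              ∀ m ∈ I, raw x (y m) = a m).card)
    (u v : Fin n) (huv : u ≠ v) (i j : Fin k) (hij : i ≠ j) (C : Fin k → Cell T D)
    (hgood : ∀ x : Fin k → Fin n, x i = u → x j = v → Function.Injective x →
      (∀ l, l ≠ i → l ≠ j → cell (x l) = C l) →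
      (∀ l m, l ≠ m → ((l ≠ i ∧ l ≠ j) ∨ (m ≠ i ∧ m ≠ j)) → raw (x l) (x m) = (l, m)) →
      Good cell lab x) :
    h ^ (k - 2) ≤ degS (goodEdges cell lab) {u, v} := by
  classical
  let y₀ : Fin k → Fin n := fun l => if l = i then u else v
  have hi : y₀ i = u := by simp [y₀]
  have hj : y₀ j = v := by simp [y₀, hij.symm]
  have hinj₀ : Set.InjOn y₀ (({i, j} : Finset (Fin k)) : Set (Fin k)) := by
    intro l hl m hm hlm
    simp only [coe_insert, coe_singleton, Set.mem_insert_iff, Set.mem_singleton_iff] at hl hm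
    rcases hl with rfl | rfl <;> rcases hm with rfl | rfl
    · rfl
    · rw [hi, hj] at hlm; exact absurd hlm huv
    · rw [hi, hj] at hlm; exact absurd hlm.symm huv
    · rfl
  have hcount := card_tuples cell raw hext C {i, j} y₀ hinj₀ (univ \ {i, j}) sdiff_disjoint
  have hJ : (univ \ {i, j} : Finset (Fin k)).card = k - 2 := by
    rw [card_sdiff_of_subset (subset_univ _), card_pair hij]; simp
  rw [hJ] at hcount
  refine hcount.trans ?_
  have hunion : ({i, j} : Finset (Fin k)) ∪ univ \ {i, j} = univ := by simp
  have key_fact : ∀ y ∈ (univ.filter fun y : Fin k → Fin n =>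
      (∀ l, l ∉ univ \ {i, j} → y l = y₀ l) ∧ Set.InjOn y ↑({i, j} ∪ univ \ {i, j}) ∧
      (∀ l ∈ univ \ {i, j}, cell (y l) = C l) ∧
      (∀ l ∈ {i, j} ∪ univ \ {i, j}, ∀ m ∈ {i, j} ∪ univ \ {i, j}, l ≠ m →
        (l ∈ univ \ {i, j} ∨ m ∈ univ \ {i, j}) →
        raw (y l) (y m) = (l, m) ∨ raw (y m) (y l) = (m, l))),
      y i = u ∧ y j = v ∧ Good cell lab y := by
    intro y hy
    rw [hunion] at hy
    simp only [mem_filter, mem_univ, true_and, Finset.mem_sdiff, mem_insert, mem_singleton, not_or,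
      coe_univ, forall_true_left] at hy
    obtain ⟨h1, h2, h3, h4⟩ := hy
    have hyi : y i = u := by rw [h1 i (by simp), hi]
    have hyj : y j = v := by rw [h1 j (by simp), hj]
    refine ⟨hyi, hyj, hgood y hyi hyj (Set.injOn_univ.1 h2) (fun l ha hb => h3 l ⟨ha, hb⟩) ?_⟩
    intro l m hlm hor
    rcases h4 l m hlm hor with h | h
    · exact h
    · rw [hraw, h]; rfl
  unfold degS
  refine card_le_card_of_injOn (fun x => univ.image x) ?_ ?_
  · intro y hy
    obtain ⟨hyi, hyj, hg⟩ := key_fact y hy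
    simp only [coe_filter, Set.mem_ofPred_eq, goodEdges, mem_image, mem_filter, mem_univ, true_and]
    refine ⟨⟨y, hg, rfl⟩, ?_⟩
    intro w hw
    rw [mem_insert, mem_singleton] at hw
    rcases hw with rfl | rfl
    · exact mem_image.2 ⟨i, mem_univ _, hyi⟩
    · exact mem_image.2 ⟨j, mem_univ _, hyj⟩
  · intro y hy y' hy' heq
    obtain ⟨hyi, -, hg⟩ := key_fact y hy
    obtain ⟨hyi', -, hg'⟩ := key_fact y' hy'
    simp only at heq
    funext l
    by_cases hl : l = i
    · rw [hl, hyi, hyi']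
    · have : y l ∈ univ.image y' := by rw [← heq]; exact mem_image_of_mem _ (mem_univ _)
      obtain ⟨m, -, hm⟩ := mem_image.1 this
      have hmi : m ≠ i := by
        rintro rfl
        apply hl
        apply hg.1
        rw [← hm, hyi, hyi']
      have e1 := hg.2.1 i l (Ne.symm hl)
      have e2 := hg'.2.1 i m (Ne.symm hmi)
      -- the label of the pair `u, y l` gives the position of `y l` in both tuples
      rw [hm, hyi', ← hyi, e1] at e2
      have : l = m := congrArg Prod.snd e2
      rw [this] at hm ⊢
      exact hm.symm

/-- Criterion for `Strict`: off `t₀`, the coordinates multiplied by the signs `s` increase. -/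
lemma strict_of_off {k T D : ℕ} (C : Fin k → Cell T D) (t₀ : Fin T) (s : Fin T → ℤ)
    (h : ∀ t, t ≠ t₀ → (s t = 1 ∨ s t = -1) ∧
      ∀ l m : Fin k, l < m → s t * (C l).co t < s t * (C m).co t) : Strict C := by
  refine ⟨t₀, fun t ht => ?_⟩
  obtain ⟨h1 | h1, h2⟩ := h t ht
  · left; intro l m hlm
    have := h2 l m hlm
    rw [h1] at this
    show (C l).co t < (C m).co t
    linarith
  · right; intro l m hlm
    have := h2 l m hlm
    rw [h1] at this
    show (C m).co t < (C l).co t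
    linarith

/-- Minimum degree of the construction. A pair with a valid raw label is completed along a tuple of
cells witnessing its validity. A pair with the default label takes positions `0` and `1`, and is
completed by cells obtained from that of `v` by moving in the sign direction of the pair. -/
lemma good_degree {n k T h : ℕ} (hk : 3 ≤ k) (hT : 0 < T)
    (cell : Fin n → Cell T (k * T * (T + 1)))
    (raw : Fin n → Fin n → Fin k × Fin k) (hraw : ∀ u v, raw v u = (raw u v).swap)
    (hext : ∀ (y : Fin k → Fin n) (I : Finset (Fin k)) (a : Fin k → Fin k × Fin k)
      (c : Cell T (k * T * (T + 1))),
      Set.InjOn y I → h ≤ (univ.filter fun x => cell x = c ∧ x ∉ I.image y ∧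
              ∀ m ∈ I, raw x (y m) = a m).card)
    (u v : Fin n) (huv : u ≠ v) :
    h ^ (k - 2) ≤
      degS (goodEdges cell (label cell raw ⟨0, by omega⟩ ⟨1, by omega⟩)) {u, v} := by
  set a : Fin k := ⟨0, by omega⟩ with ha
  set b : Fin k := ⟨1, by omega⟩ with hb
  by_cases hv : Valid (cell u) (cell v) (raw u v)
  · obtain ⟨hne, C, hC, hCu, hCv⟩ := id hv
    refine pow_le_degS cell raw _ hraw hext u v huv (raw u v).1 (raw u v).2 hne C ?_
    intro x hxi hxj hinj hcell hcol
    have hcell' : ∀ l, cell (x l) = C l := by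
      intro l
      by_cases h1 : l = (raw u v).1
      · rw [h1, hxi, hCu]
      · by_cases h2 : l = (raw u v).2
        · rw [h2, hxj, hCv]
        · exact hcell l h1 h2
    refine ⟨hinj, ?_, ?_⟩
    · intro l m hlm
      refine label_of_valid ?_ (by rw [hcell', hcell']; exact hC.valid hlm)
      by_cases hor : (l ≠ (raw u v).1 ∧ l ≠ (raw u v).2) ∨ (m ≠ (raw u v).1 ∧ m ≠ (raw u v).2)
      · exact hcol l m hlm hor
      · have : (l = (raw u v).1 ∧ m = (raw u v).2) ∨ (l = (raw u v).2 ∧ m = (raw u v).1) := by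
          have hl' : l = (raw u v).1 ∨ l = (raw u v).2 := by tauto
          have hm' : m = (raw u v).1 ∨ m = (raw u v).2 := by tauto
          rcases hl' with h1 | h1 <;> rcases hm' with h2 | h2
          · exact absurd (h1.trans h2.symm) hlm
          · exact Or.inl ⟨h1, h2⟩
          · exact Or.inr ⟨h1, h2⟩
          · exact absurd (h1.trans h2.symm) hlm
        rcases this with ⟨h1, h2⟩ | ⟨h1, h2⟩
        · rw [h1, h2, hxi, hxj]
        · rw [h1, h2, hxi, hxj, hraw]; rfl
    · obtain ⟨t₀, ht₀⟩ := hC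
      refine ⟨t₀, fun t ht => ?_⟩
      rcases ht₀ t ht with h1 | h1
      · left; intro l m hlm
        refine key_lt_of_co_lt ?_
        rw [hcell', hcell']; exact h1 hlm
      · right; intro l m hlm
        refine key_lt_of_co_lt ?_
        rw [hcell', hcell']; exact h1 hlm
  · wlog hlt : u < v generalizing u v with H
    · have := H v u huv.symm (fun h' => hv (by rw [hraw v u]; exact h'.swap))
        (lt_of_le_of_ne (not_lt.1 hlt) huv.symm)
      rwa [pair_comm] at this
    have hlab : label cell raw a b u v = (a, b) := by
      unfold label; rw [if_neg hv, if_pos hlt]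
    have hab : a ≠ b := by simp [ha, hb]
    obtain ⟨t₀, ht₀⟩ := Cell.exists_shift (k := k) hT (cell v)
    -- `s` records the direction of the pair in each order; `s t * key t` increases from `u` to `v`
    let s : Fin T → ℤ := fun t => if key cell t u < key cell t v then 1 else -1
    have hs : ∀ t, s t = 1 ∨ s t = -1 := by
      intro t; by_cases h1 : key cell t u < key cell t v <;> simp [s, h1]
    have hs1 : ∀ t, |s t| ≤ 1 := by
      intro t; rcases hs t with h1 | h1 <;> simp [h1]
    have hss : ∀ t, s t * s t = 1 := by
      intro t; rcases hs t with h1 | h1 <;> simp [h1]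
    have hkey : ∀ t, s t * key cell t u < s t * key cell t v := by
      intro t
      by_cases h1 : key cell t u < key cell t v
      · simp [s, h1]
      · have h2 : key cell t v < key cell t u :=
          lt_of_le_of_ne (not_lt.1 h1) fun he => huv (key_injective cell t he).symm
        simp [s, h1, h2]
    have hco : ∀ t, s t * (cell u).co t ≤ s t * (cell v).co t := by
      intro t
      by_cases h1 : key cell t u < key cell t v
      · simpa [s, h1] using co_le_of_key_lt h1
      · have h2 : key cell t v < key cell t u :=
          lt_of_le_of_ne (not_lt.1 h1) fun he => huv (key_injective cell t he).symm
        simpa [s, h1] using co_le_of_key_lt h2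
    -- off `t₀`, the cell `R l` is the cell of `v` moved `l` steps along `s`, and `Rm` is the cell of
    -- `v` moved one step back
    have hR : ∀ l : Fin k, ∃ r : Cell T (k * T * (T + 1)), ∀ t, t ≠ t₀ →
        r.co t = (cell v).co t + ((l : ℕ) : ℤ) * s t := fun l =>
      ht₀ s hs1 _ (by rw [Nat.abs_cast]; exact_mod_cast l.2.le)
    choose R hR using hR
    obtain ⟨Rm, hRm⟩ := ht₀ s hs1 (-1) (by simp; omega)
    have hRs : ∀ l t, t ≠ t₀ → s t * (R l).co t = s t * (cell v).co t + (l : ℕ) := by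
      intro l t ht
      rw [hR l t ht, mul_add, mul_left_comm, hss, mul_one]
    have hRms : ∀ t, t ≠ t₀ → s t * Rm.co t = s t * (cell v).co t - 1 := by
      intro t ht
      rw [hRm t ht, mul_add, mul_left_comm, hss]; ring
    -- `u` and `v` may share coordinates of their cells, so the cells of the edge need not form a
    -- `Strict` tuple. Validity of the new labels is witnessed by two tuples instead: `C₁` for the
    -- pairs that avoid `v`, with `R 1` in place of the cell of `v`, and `C₂` for the pairs that
    -- avoid `u`, with `Rm` in place of the cell of `u`.
    let C₁ : Fin k → Cell T (k * T * (T + 1)) := fun l => if l = a then cell u else R l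
    let C₂ : Fin k → Cell T (k * T * (T + 1)) := fun l =>
      if l = a then Rm else if l = b then cell v else R l
    have hlt_a : ∀ l : Fin k, ¬ l < a := fun l => by simp [ha, Fin.lt_def]
    have hC₁ : Strict C₁ := by
      refine strict_of_off C₁ t₀ s fun t ht => ⟨hs t, fun l m hlm => ?_⟩
      have hm : m ≠ a := fun h1 => hlt_a l (h1 ▸ hlm)
      simp only [C₁, if_neg hm]
      have hlm' : ((l : ℕ) : ℤ) < (m : ℕ) := by exact_mod_cast hlm
      have := hco t
      by_cases hl : l = a
      · rw [if_pos hl, hRs m t ht]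
        linarith [show (0 : ℤ) ≤ ((l : ℕ) : ℤ) by positivity]
      · rw [if_neg hl, hRs m t ht, hRs l t ht]
        linarith
    have hC₂ : Strict C₂ := by
      refine strict_of_off C₂ t₀ s fun t ht => ⟨hs t, fun l m hlm => ?_⟩
      have hm : m ≠ a := fun h1 => hlt_a l (h1 ▸ hlm)
      have hval : ∀ l, l ≠ a → s t * (C₂ l).co t = s t * (cell v).co t + ((l : ℕ) : ℤ)
          ∨ (l = b ∧ s t * (C₂ l).co t = s t * (cell v).co t) := by
        intro l hl
        by_cases hlb : l = b
        · right; simp [C₂, hlb, hab.symm]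
        · left; simp only [C₂, if_neg hl, if_neg hlb]; exact hRs l t ht
      have hlm' : ((l : ℕ) : ℤ) < (m : ℕ) := by exact_mod_cast hlm
      have hl0 : (0 : ℤ) ≤ ((l : ℕ) : ℤ) := by positivity
      by_cases hl : l = a
      · have h1 : s t * (C₂ l).co t = s t * (cell v).co t - 1 := by
          simp only [C₂, if_pos hl]; exact hRms t ht
        rcases hval m hm with h2 | ⟨-, h2⟩
        · linarith
        · linarith
      · have hbl : (1 : ℤ) ≤ ((l : ℕ) : ℤ) := by
          have : (l : ℕ) ≠ 0 := fun h1 => hl (Fin.ext h1)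
          omega
        have hmb : m ≠ b := by
          rintro rfl
          simp only [hb, Nat.cast_one] at hlm'
          omega
        rcases hval m hm with h2 | ⟨h3, -⟩
        · rcases hval l hl with h1 | ⟨-, h1⟩ <;> linarith
        · exact absurd h3 hmb
    refine pow_le_degS cell raw _ hraw hext u v huv a b hab R ?_
    intro x hxa hxb hinj hcell hcol
    have hcase : ∀ l : Fin k, l = a ∨ l = b ∨ (l ≠ a ∧ l ≠ b) := by
      intro l; by_cases h1 : l = a <;> by_cases h2 : l = b <;> simp [h1, h2]
    -- the symmetry `label_swap` reduces the labels to pairs of increasing positions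
    have hlabel : ∀ l m : Fin k, l < m → label cell raw a b (x l) (x m) = (l, m) := by
      intro l m hlm
      have hma : m ≠ a := fun h1 => hlt_a l (h1 ▸ hlm)
      rcases hcase m with rfl | rfl | ⟨-, hmb⟩
      · exact absurd rfl hma
      · have : l = a := by
          apply Fin.ext
          have : (l : ℕ) < 1 := hlm
          simp [ha]; omega
        rw [this, hxa, hxb]; exact hlab
      · have hraw' := hcol l m hlm.ne (Or.inr ⟨hma, hmb⟩)
        refine label_of_valid hraw' ?_
        have hm1 : C₁ m = cell (x m) := by rw [hcell m hma hmb]; simp [C₁, hma]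
        have hm2 : C₂ m = cell (x m) := by rw [hcell m hma hmb]; simp [C₂, hma, hmb]
        rcases hcase l with h1 | h1 | ⟨hla, hlb⟩
        · have : C₁ l = cell (x l) := by rw [h1, hxa]; simp [C₁]
          rw [← this, ← hm1]; exact hC₁.valid hlm.ne
        · have : C₂ l = cell (x l) := by rw [h1, hxb]; simp [C₂, hab.symm]
          rw [← this, ← hm2]; exact hC₂.valid hlm.ne
        · have : C₁ l = cell (x l) := by rw [hcell l hla hlb]; simp [C₁, hla]
          rw [← this, ← hm1]; exact hC₁.valid hlm.ne
    refine ⟨hinj, ?_, t₀, fun t ht => ?_⟩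
    · intro l m hlm
      rcases lt_or_gt_of_ne hlm with h1 | h1
      · exact hlabel l m h1
      · rw [label_swap hraw (fun h2 => hlm (hinj h2).symm), hlabel m l h1]; rfl
    · have hmain : ∀ l m : Fin k, l < m → s t * key cell t (x l) < s t * key cell t (x m) := by
        have hlift : ∀ p q : Fin n, s t * (cell p).co t < s t * (cell q).co t →
            s t * key cell t p < s t * key cell t q := by
          intro p q hpq
          rcases hs t with h1 | h1
          · rw [h1] at hpq ⊢
            have := key_lt_of_co_lt (cell := cell) (t := t) (u := p) (v := q) (by linarith)
            linarith
          · rw [h1] at hpq ⊢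
            have := key_lt_of_co_lt (cell := cell) (t := t) (u := q) (v := p) (by linarith)
            linarith
        intro l m hlm
        have hlm' : ((l : ℕ) : ℤ) < (m : ℕ) := by exact_mod_cast hlm
        have hl0 : (0 : ℤ) ≤ ((l : ℕ) : ℤ) := by positivity
        have hma : m ≠ a := fun h1 => hlt_a l (h1 ▸ hlm)
        rcases hcase m with rfl | rfl | ⟨-, hmb⟩
        · exact absurd rfl hma
        · have : l = a := by
            apply Fin.ext
            have : (l : ℕ) < 1 := hlm
            simp [ha]; omega
          rw [this, hxa, hxb]; exact hkey t
        · apply hlift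
          rw [hcell m hma hmb, hRs m t ht]
          rcases hcase l with h1 | h1 | ⟨hla, hlb⟩
          · rw [h1, hxa]; linarith [hco t]
          · rw [h1, hxb]; linarith
          · rw [hcell l hla hlb, hRs l t ht]; linarith
      rcases hs t with h1 | h1
      · left; intro l m hlm
        have := hmain l m hlm
        rw [h1] at this
        show key cell t (x l) < key cell t (x m)
        linarith
      · right; intro l m hlm
        have := hmain l m hlm
        rw [h1] at this
        show key cell t (x m) < key cell t (x l)
        linarith

/-! ### A copy of `F` yields a vanishing order -/

/-- If the construction with more than `|E|` orders contains a copy of `(V, E)`, then `(V, E)` has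
a `2`-vanishing order, namely the pull-back of an order in which all edges of the copy are
monotone. -/
lemma vanishing_of_copy {α : Type*} [DecidableEq α] {n k T D : ℕ} (V : Finset α)
    (E : Finset (Finset α)) (hF : IsKGraph k V E) (hE : E.card < T) (hn : 0 < n)
    (cell : Fin n → Cell T D) (lab : Fin n → Fin n → Fin k × Fin k)
    (hc : ContainsCopy V E (univ : Finset (Fin n)) (goodEdges cell lab)) :
    ∃ σ : α → ℕ, IsVanishingOrder 2 V E σ := by
  classical
  obtain ⟨f, hf, -, hfE⟩ := hc
  have : Nonempty (Fin n) := ⟨⟨0, hn⟩⟩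
  have hx : ∀ e : Finset α, e ∈ E → ∃ x : Fin k → Fin n,
      Good cell lab x ∧ univ.image x = e.image f := by
    intro e he
    have := hfE e he
    simpa [goodEdges] using this
  choose! x hxg hxe using hx
  have ht : ∀ e : Finset α, e ∈ E → ∃ t₀ : Fin T, ∀ t, t ≠ t₀ →
      StrictMono (fun l => key cell t (x e l)) ∨ StrictAnti (fun l => key cell t (x e l)) :=
    fun e he => (hxg e he).2.2
  have hTne : Nonempty (Fin T) := ⟨⟨0, by omega⟩⟩
  choose! τ hτ using ht
  -- each edge excludes one order only, and there are more orders than edges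
  obtain ⟨t, htE⟩ : ∃ t : Fin T, t ∉ E.image τ := by
    by_contra hcon
    push Not at hcon
    have h1 : (univ : Finset (Fin T)) ⊆ E.image τ := fun t _ => hcon t
    have h2 := (card_le_card h1).trans card_image_le
    simp at h2
    omega
  have hmono : ∀ e ∈ E, StrictMono (fun l => key cell t (x e l)) ∨
      StrictAnti (fun l => key cell t (x e l)) := fun e he =>
    hτ e he t fun h1 => htE (mem_image.2 ⟨e, he, h1.symm⟩)
  let K : α → ℤ := fun v => key cell t (f v)
  have hK : Set.InjOn K V := fun u hu v hv h1 => hf hu hv (key_injective cell t h1)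
  let σ : α → ℕ := fun v => (V.filter fun w => K w ≤ K v).card
  have hσlt : ∀ u ∈ V, ∀ v ∈ V, K u < K v → σ u < σ v := by
    intro u hu v hv h1
    apply card_lt_card
    rw [Finset.ssubset_iff_of_subset]
    · exact ⟨v, by simp [hv], by simp [h1]⟩
    · intro w hw
      rw [mem_filter] at hw ⊢
      exact ⟨hw.1, hw.2.trans h1.le⟩
  have hσle : ∀ u ∈ V, ∀ v ∈ V, (σ u ≤ σ v ↔ K u ≤ K v) := by
    intro u hu v hv
    constructor
    · intro h1
      by_contra h2
      exact absurd (hσlt v hv u hu (not_le.1 h2)) (not_lt.2 h1)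
    · intro h1
      rcases h1.lt_or_eq with h2 | h2
      · exact (hσlt u hu v hv h2).le
      · rw [hK hu hv h2]
  have hσinj : Set.InjOn σ V := by
    intro u hu v hv h1
    exact hK hu hv (le_antisymm ((hσle u hu v hv).1 h1.le) ((hσle v hv u hu).1 h1.ge))
  have hord : IsOrdering V σ := by
    have hmaps : ∀ v ∈ V, σ v ∈ Finset.Icc 1 V.card := by
      intro v hv
      rw [Finset.mem_Icc]
      exact ⟨card_pos.2 ⟨v, by simp [hv]⟩, card_le_card (filter_subset _ _)⟩
    have himg : V.image σ = Finset.Icc 1 V.card := by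
      apply eq_of_subset_of_card_le
      · intro w hw
        obtain ⟨v, hv, rfl⟩ := mem_image.1 hw
        exact hmaps v hv
      · rw [card_image_of_injOn hσinj]; simp
    refine ⟨fun v hv => ?_, hσinj, fun w hw => ?_⟩
    · have := hmaps v hv
      rwa [Finset.mem_Icc] at this
    · have : w ∈ V.image σ := by rw [himg, Finset.mem_Icc]; exact hw
      obtain ⟨v, hv, hvw⟩ := mem_image.1 this
      exact ⟨v, hv, hvw⟩
  -- ranks inside an edge
  have hrank : ∀ e ∈ E, ∀ v ∈ e, ∀ l, f v = x e l →
      rankIn e σ v = (univ.filter fun m => key cell t (x e m) ≤ key cell t (x e l)).card := by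
    intro e he v hv l hl
    have heV := (hF e he).1
    unfold rankIn
    have h1 : (e.filter fun y => σ y ≤ σ v).image f
        = (univ.filter fun m => key cell t (x e m) ≤ key cell t (x e l)).image (x e) := by
      ext w
      simp only [mem_image, mem_filter, mem_univ, true_and]
      constructor
      · rintro ⟨y, ⟨hy, hyv⟩, rfl⟩
        have : f y ∈ univ.image (x e) := by rw [hxe e he]; exact mem_image_of_mem f hy
        obtain ⟨m, -, hm⟩ := mem_image.1 this
        refine ⟨m, ?_, hm⟩
        rw [hm, ← hl]
        exact (hσle y (heV hy) v (heV hv)).1 hyv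
      · rintro ⟨m, hm, rfl⟩
        have : x e m ∈ e.image f := by rw [← hxe e he]; exact mem_image_of_mem _ (mem_univ m)
        obtain ⟨y, hy, hym⟩ := mem_image.1 this
        refine ⟨y, ⟨hy, (hσle y (heV hy) v (heV hv)).2 ?_⟩, hym⟩
        show key cell t (f y) ≤ key cell t (f v)
        rw [hym, hl]; exact hm
    rw [← card_image_of_injOn (hf.mono (fun y hy => heV (mem_filter.1 hy).1)), h1,
      card_image_of_injective _ (hxg e he).1]
  -- the ranks of a pair do not depend on the edge
  have hpair : ∀ e ∈ E, ∀ e' ∈ E, ∀ u v, u ≠ v → u ∈ e → v ∈ e → u ∈ e' → v ∈ e' →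
      rankIn e σ u = rankIn e' σ u := by
    intro e he e' he' u v huv hue hve hue' hve'
    have hget : ∀ e ∈ E, ∀ w ∈ e, ∃ l, x e l = f w := by
      intro e he w hw
      have : f w ∈ univ.image (x e) := by rw [hxe e he]; exact mem_image_of_mem f hw
      obtain ⟨m, -, hm⟩ := mem_image.1 this
      exact ⟨m, hm⟩
    obtain ⟨i, hi⟩ := hget e he u hue
    obtain ⟨j, hj⟩ := hget e he v hve
    obtain ⟨i', hi'⟩ := hget e' he' u hue'
    obtain ⟨j', hj'⟩ := hget e' he' v hve'
    have hfne : f u ≠ f v := fun h1 => huv (hf ((hF e he).1 hue) ((hF e he).1 hve) h1)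
    have hij : i ≠ j := by rintro rfl; exact hfne (hi.symm.trans hj)
    have hij' : i' ≠ j' := by rintro rfl; exact hfne (hi'.symm.trans hj')
    have e1 := (hxg e he).2.1 i j hij
    have e2 := (hxg e' he').2.1 i' j' hij'
    rw [hi, hj] at e1
    rw [hi', hj', e1, Prod.mk.injEq] at e2
    obtain ⟨rfl, rfl⟩ := e2
    rw [hrank e he u hue i hi.symm, hrank e' he' u hue' i hi'.symm]
    congr 1
    ext m
    simp only [mem_filter, mem_univ, true_and]
    -- the two edges are monotone in the same direction, since otherwise they would relate the
    -- positions `i, j` to the order of `u, v` in opposite ways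
    have hcmp : (key cell t (x e i) < key cell t (x e j) ↔
        key cell t (x e' i) < key cell t (x e' j)) := by rw [hi, hj, hi', hj']
    rcases hmono e he with h1 | h1 <;> rcases hmono e' he' with h2 | h2
    · exact h1.le_iff_le.trans h2.le_iff_le.symm
    · exfalso
      have h3 := h1.lt_iff_lt (a := i) (b := j)
      have h4 := h2.lt_iff_gt (a := i) (b := j)
      rw [hcmp] at h3
      rcases lt_or_gt_of_ne hij with h5 | h5
      · exact absurd (h4.1 (h3.2 h5)) h5.not_gt
      · exact absurd (h3.1 (h4.2 h5)) h5.not_gt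
    · exfalso
      have h3 := h1.lt_iff_gt (a := i) (b := j)
      have h4 := h2.lt_iff_lt (a := i) (b := j)
      rw [hcmp] at h3
      rcases lt_or_gt_of_ne hij with h5 | h5
      · exact absurd (h3.1 (h4.2 h5)) h5.not_gt
      · exact absurd (h4.1 (h3.2 h5)) h5.not_gt
    · exact h1.le_iff_ge.trans h2.le_iff_ge.symm
  -- the colour of a pair is read off from an arbitrary edge containing it
  refine ⟨σ, hord, fun X => if h : ∃ e ∈ E, X ⊆ e then X.image (rankIn h.choose σ) else ∅, ?_⟩
  intro e he X hXe hX
  have h : ∃ e ∈ E, X ⊆ e := ⟨e, he, hXe⟩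
  simp only [dif_pos h]
  obtain ⟨he', hXe'⟩ := h.choose_spec
  obtain ⟨u, v, huv, rfl⟩ := card_eq_two.1 hX
  have hu : u ∈ ({u, v} : Finset α) := by simp
  have hv : v ∈ ({u, v} : Finset α) := by simp
  rw [image_insert, image_singleton, image_insert, image_singleton,
    hpair _ he' e he u v huv (hXe' hu) (hXe' hv) (hXe hu) (hXe hv),
    hpair _ he' e he v u huv.symm (hXe' hv) (hXe' hu) (hXe hv) (hXe hu)]

/-! ### Conclusion -/

/-- If `k ≥ 3` and `F` is a `k`-graph with `π₂(F) = 0`, then `F` admits a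
`2`-vanishing order. -/
theorem stmt_0 {α : Type*} [DecidableEq α] (k : ℕ) (hk : 3 ≤ k)
    (V : Finset α) (E : Finset (Finset α)) (hF : IsKGraph k V E)
    (h0 : HasTuranDensity k 2 V E 0) :
    ∃ σ : α → ℕ, IsVanishingOrder 2 V E σ := by
  classical
  by_contra hno
  have : NeZero k := ⟨by omega⟩
  set T := E.card + 1 with hTdef
  have hT : 0 < T := by omega
  set D := k * T * (T + 1) with hD
  obtain ⟨w, hw, hcol⟩ := exists_coloring k (Cell T D) (Fin k × Fin k) Prod.swap
  set N := Fintype.card (Cell T D) with hN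
  have hNpos : 0 < N := by
    rw [hN, Fintype.card_pos_iff]
    obtain ⟨z, -⟩ := Cell.exists_of_sum_le (T := T) (C := D) (fun _ => 0) (by simp)
    exact ⟨z⟩
  -- the extremal number is large for a sequence of orders
  have hex : ∀ᶠ h : ℕ in atTop, h ^ (k - 2) ≤ exDeg k 2 (N * (w * h)) V E := by
    filter_upwards [hcol, eventually_ge_atTop 2] with h hcol hh
    -- an even partition of the vertices into cells
    let eqv : Fin (N * (w * h)) ≃ Cell T D × Fin (w * h) :=
      finProdFinEquiv.symm.trans ((Fintype.equivFin (Cell T D)).symm.prodCongr (Equiv.refl _))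
    let cell : Fin (N * (w * h)) → Cell T D := fun x => (eqv x).1
    have hcell : ∀ c, w * h ≤ (univ.filter fun x => cell x = c).card := by
      intro c
      have := card_le_card_of_injOn (s := (univ : Finset (Fin (w * h))))
        (t := univ.filter fun x => cell x = c) (fun i => eqv.symm (c, i))
        (by intro i _; simp [cell]) (by intro i _ j _ hij; simpa using hij)
      simpa using this
    obtain ⟨g, hg⟩ := hcol cell hcell
    let raw : Fin (N * (w * h)) → Fin (N * (w * h)) → Fin k × Fin k :=
      fun u v => g u v + (g v u).swap
    have hraw : ∀ u v, raw v u = (raw u v).swap := by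
      intro u v
      simp only [raw, Prod.swap_add, Prod.swap_swap, add_comm]
    have hdeg := good_degree (n := N * (w * h)) (h := h) hk hT cell raw hraw hg
    set H := goodEdges cell (label cell raw ⟨0, by omega⟩ ⟨1, by omega⟩) with hH
    have hn2 : 2 ≤ N * (w * h) := by
      calc 2 ≤ h := hh
        _ ≤ w * h := Nat.le_mul_of_pos_left _ hw
        _ ≤ _ := Nat.le_mul_of_pos_left _ hNpos
    have hmin : h ^ (k - 2) ≤ minDeg 2 (univ : Finset (Fin (N * (w * h)))) H := by
      -- nonemptiness excludes the junk value `sInf ∅ = 0`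
      unfold minDeg
      have hne : {d | ∃ S ⊆ (univ : Finset (Fin (N * (w * h)))),
          S.card = 2 ∧ d = degS H S}.Nonempty := by
        obtain ⟨S, hS, hS2⟩ := exists_subset_card_eq
          (s := (univ : Finset (Fin (N * (w * h))))) (n := 2) (by simpa using hn2)
        exact ⟨_, S, hS, hS2, rfl⟩
      obtain ⟨S, -, hS2, hSd⟩ := Nat.sInf_mem hne
      rw [hSd]
      obtain ⟨u, v, huv, rfl⟩ := card_eq_two.1 hS2
      exact hdeg u v huv
    -- `exDeg` is a supremum of naturals, so boundedness is needed to rule out a junk value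
    refine hmin.trans (le_csSup ?_ ?_)
    · refine ⟨(univ : Finset (Finset (Fin (N * (w * h))))).card, ?_⟩
      rintro d ⟨E', -, -, rfl⟩
      unfold minDeg
      have hne : {d | ∃ S ⊆ (univ : Finset (Fin (N * (w * h)))),
          S.card = 2 ∧ d = degS E' S}.Nonempty := by
        obtain ⟨S, hS, hS2⟩ := exists_subset_card_eq
          (s := (univ : Finset (Fin (N * (w * h))))) (n := 2) (by simpa using hn2)
        exact ⟨_, S, hS, hS2, rfl⟩
      obtain ⟨S, -, -, hSd⟩ := Nat.sInf_mem hne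
      rw [hSd]
      exact card_le_card (subset_univ _)
    · refine ⟨H, ?_, ?_, rfl⟩
      · intro e he
        simp only [hH, goodEdges, mem_image, mem_filter, mem_univ, true_and] at he
        obtain ⟨x, hx, rfl⟩ := he
        rw [card_image_of_injective _ hx.1]; simp
      · intro hc
        exact hno (vanishing_of_copy V E hF (by omega) (by omega) cell _ hc)
  have hsub : Tendsto (fun h : ℕ => N * (w * h)) atTop atTop := by
    refine tendsto_atTop_mono (fun h => ?_) tendsto_id
    calc h ≤ w * h := Nat.le_mul_of_pos_left _ hw
      _ ≤ _ := Nat.le_mul_of_pos_left _ hNpos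
  have hlim := h0.comp hsub
  have hc : (0 : ℝ) < 1 / (N * w : ℝ) ^ (k - 2) := by
    have : (0 : ℝ) < N := by exact_mod_cast hNpos
    have : (0 : ℝ) < w := by exact_mod_cast hw
    positivity
  obtain ⟨h, h1, h2, h3⟩ := ((hlim.eventually (gt_mem_nhds hc)).and
    (hex.and (hsub.eventually (eventually_ge_atTop k)))).exists
  simp only [Function.comp] at h1
  -- `(n - 2).choose (k - 2) ≤ n ^ (k - 2) = (N * w) ^ (k - 2) * h ^ (k - 2)` for `n = N * (w * h)`
  have hch : 0 < (N * (w * h) - 2).choose (k - 2) := Nat.choose_pos (by omega)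
  have hch2 : (N * (w * h) - 2).choose (k - 2) ≤ (N * (w * h)) ^ (k - 2) :=
    (Nat.choose_le_pow _ _).trans (Nat.pow_le_pow_left (by omega) _)
  rw [div_lt_div_iff₀ (by exact_mod_cast hch) (by
    have : (0 : ℝ) < N := by exact_mod_cast hNpos
    have : (0 : ℝ) < w := by exact_mod_cast hw
    positivity), one_mul] at h1
  have h4 : (h : ℝ) ^ (k - 2) * (N * w : ℝ) ^ (k - 2) ≤
      (exDeg k 2 (N * (w * h)) V E : ℝ) * (N * w : ℝ) ^ (k - 2) := by
    gcongr
    exact_mod_cast h2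
  have h5 : (((N * (w * h) - 2).choose (k - 2) : ℕ) : ℝ) ≤
      (h : ℝ) ^ (k - 2) * (N * w : ℝ) ^ (k - 2) := by
    calc (((N * (w * h) - 2).choose (k - 2) : ℕ) : ℝ) ≤ (((N * (w * h)) ^ (k - 2) : ℕ) : ℝ) := by
          exact_mod_cast hch2
      _ = _ := by push_cast; rw [← mul_pow]; ring
  linarith
end

section
/- Let k > ℓ ≥ 1 be integers and let F be a k-graph with π_ℓ(F) = 0. Then (a) F has an (ℓ+1)-vanishing order, and (b) for every (ℓ−1)-element subset S of V(F), the link L_F(S) is a (k−ℓ+1)-partite (k−ℓ+1)-graph. -/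
/-!
Both parts follow from one principle, `exists_copy_of_forceable`. Suppose that to every colouring
`φ` of the subsets of `Fin n` by a fixed finite set of colours there is attached a `k`-graph `H n φ`
in such a way that, for disjoint `S` and `B` with `|S| = ℓ` and `|B| = k - ℓ`, whatever the colour
of `S` is, there is a choice of colours for the subsets of `S ∪ B` not inside `S` which forces
`S ∪ B` to be an edge. Then every `F` with `π_ℓ(F) = 0` is contained in some `H n φ`.

To see this, take `φ` uniformly at random on `n = b q` vertices, `b = k - ℓ`. For a fixed `S` and
pairwise disjoint sets `B`, the events that the colours near `S ∪ B` are the required ones are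
independent with probability bounded below (`disjoint_newSets`, `sum_half_pow_le`). Hence in a
matching of `q` blocks, the number of successful blocks is below `q / L` only with exponentially
small probability. As polynomially many matchings (`blk (a + i)`, `i : Fin q`) cover all
transversal blocks evenly, a union bound over `S`, the colour of `S` and the matching yields one `φ`
good for everything (`exists_good_coloring`). Then every `ℓ`-set has degree at least `q ^ b / L`,
which is a positive proportion of `n ^ (k - ℓ)`, so `H n φ` cannot be `F`-free for large `q`.

For the vanishing order, `φ` colours `(ℓ + 1)`-sets by sets of positions and the edges of
`positionGraph` are the sets on which `φ` tells the truth; a subgraph inherits the vanishing order.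
For the links, `φ` attaches to every `(ℓ - 1)`-set `T` a partition into `k - ℓ + 1` classes, and the
edges `e` of `partiteLinkGraph` are those for which `e \ T` is a transversal of the partition of `T`
for all `T ⊆ e`. The class of `v` with respect to `T` is a function of the colour of `insert v T`,
so for `T ⊆ S` only the class of the vertex in `S \ T` is fixed by the colour of `S`, and it extends
to a bijection from `(S ∪ B) \ T` onto the classes.
-/

open Finset Filter

variable {α : Type*} {β : Type*}

/-! ### An exponential-moment bound for random colourings -/

/-- Independence: for pairwise disjoint `D i`, the events "`φ` agrees with `t i` on `D i`" about a
uniformly random `φ : I → K` all hold with probability the product of their probabilities. -/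
lemma sum_prod_indicator {I K ι : Type*} [Fintype I] [DecidableEq I] [Fintype K] [DecidableEq K]
    [Nonempty K] (T : Finset ι) (D : ι → Finset I) (t : ι → I → K)
    (hd : ∀ i ∈ T, ∀ j ∈ T, i ≠ j → Disjoint (D i) (D j)) :
    ∑ φ : I → K, ∏ i ∈ T, (if ∀ X ∈ D i, φ X = t i X then (1 : ℝ) else 0) =
      (Fintype.card K : ℝ) ^ Fintype.card I *
        ∏ i ∈ T, (1 / (Fintype.card K : ℝ)) ^ (D i).card := by
  have hK : (Fintype.card K : ℝ) ≠ 0 := by exact_mod_cast Fintype.card_ne_zero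
  -- both sides factor as products over the points `X : I`
  have h1 : ∀ φ : I → K, ∏ i ∈ T, (if ∀ X ∈ D i, φ X = t i X then (1 : ℝ) else 0) =
      ∏ X : I, ∏ i ∈ T, (if X ∈ D i then (if φ X = t i X then (1 : ℝ) else 0) else 1) := by
    intro φ
    rw [Finset.prod_comm]
    refine Finset.prod_congr rfl fun i _ => ?_
    rw [Finset.prod_ite_mem, Finset.univ_inter, Finset.prod_ite_zero]
    simp
  have h2 : ∏ i ∈ T, (1 / (Fintype.card K : ℝ)) ^ (D i).card =
      ∏ X : I, ∏ i ∈ T, (if X ∈ D i then (1 / (Fintype.card K : ℝ)) else 1) := by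
    rw [Finset.prod_comm]
    refine Finset.prod_congr rfl fun i _ => ?_
    rw [Finset.prod_ite_mem, Finset.univ_inter, Finset.prod_const]
  have h3 : (Fintype.card K : ℝ) ^ Fintype.card I = ∏ _X : I, (Fintype.card K : ℝ) := by
    simp
  rw [h2, h3, ← Finset.prod_mul_distrib]
  simp_rw [h1]
  rw [← Fintype.prod_sum (fun (X : I) (c : K) =>
    ∏ i ∈ T, (if X ∈ D i then (if c = t i X then (1 : ℝ) else 0) else 1))]
  refine Finset.prod_congr rfl fun X _ => ?_
  by_cases h : ∃ i ∈ T, X ∈ D i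
  · obtain ⟨i, hi, hX⟩ := h
    have hne : ∀ j ∈ T, j ≠ i → X ∉ D j := fun j hj hji hXj =>
      Finset.disjoint_left.1 (hd j hj i hi hji) hXj hX
    have e1 : ∀ c : K, ∏ j ∈ T, (if X ∈ D j then (if c = t j X then (1 : ℝ) else 0) else 1) =
        if c = t i X then 1 else 0 := by
      intro c
      rw [Finset.prod_eq_single i (fun j hj hji => if_neg (hne j hj hji)) (fun h => absurd hi h),
        if_pos hX]
    have e2 : ∏ j ∈ T, (if X ∈ D j then (1 / (Fintype.card K : ℝ)) else 1) =
        1 / (Fintype.card K : ℝ) := by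
      rw [Finset.prod_eq_single i (fun j hj hji => if_neg (hne j hj hji)) (fun h => absurd hi h),
        if_pos hX]
    simp_rw [e1]
    rw [e2]
    simp [hK]
  · push Not at h
    have e1 : ∀ c : K, ∏ j ∈ T, (if X ∈ D j then (if c = t j X then (1 : ℝ) else 0) else 1) = 1 :=
      fun c => Finset.prod_eq_one fun j hj => if_neg (h j hj)
    have e2 : ∏ j ∈ T, (if X ∈ D j then (1 / (Fintype.card K : ℝ)) else 1) = 1 :=
      Finset.prod_eq_one fun j hj => if_neg (h j hj)
    simp_rw [e1]
    rw [e2]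
    simp

/-- Chernoff-type estimate: for pairwise disjoint `D i` and a uniformly random colouring `φ : I → K`, the events
"`φ` agrees with `t i` on `D i`" are independent, so `2^{-X}`, with `X` the number of events that
hold, has exponentially small expectation. -/
lemma sum_half_pow_le {I K ι : Type*} [Fintype I] [DecidableEq I] [Fintype K] [DecidableEq K]
    [Nonempty K] [DecidableEq ι] (J : Finset ι) (D : ι → Finset I) (t : ι → I → K)
    (hd : ∀ i ∈ J, ∀ j ∈ J, i ≠ j → Disjoint (D i) (D j)) (M : ℕ)
    (hM : ∀ i ∈ J, (D i).card ≤ M) :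
    ∑ φ : I → K, (1 / 2 : ℝ) ^ (J.filter fun i => ∀ X ∈ D i, φ X = t i X).card ≤
      (Fintype.card K : ℝ) ^ Fintype.card I *
        (1 - (1 / (Fintype.card K : ℝ)) ^ M / 2) ^ J.card := by
  have hK : (1 : ℝ) ≤ Fintype.card K := by exact_mod_cast Fintype.card_pos (α := K)
  have hw0 : 0 ≤ 1 / (Fintype.card K : ℝ) := by positivity
  have hw1 : 1 / (Fintype.card K : ℝ) ≤ 1 := by
    rw [div_le_one (by linarith)]; exact hK
  set w := 1 / (Fintype.card K : ℝ) with hw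
  have h1 : ∀ φ : I → K, (1 / 2 : ℝ) ^ (J.filter fun i => ∀ X ∈ D i, φ X = t i X).card =
      ∏ i ∈ J, ((-1 / 2) * (if ∀ X ∈ D i, φ X = t i X then (1 : ℝ) else 0) + 1) := by
    intro φ
    rw [← Finset.prod_const, Finset.prod_filter]
    refine Finset.prod_congr rfl fun i _ => ?_
    split_ifs <;> norm_num
  have h2 : ∑ φ : I → K, (1 / 2 : ℝ) ^ (J.filter fun i => ∀ X ∈ D i, φ X = t i X).card =
      (Fintype.card K : ℝ) ^ Fintype.card I * ∏ i ∈ J, ((-1 / 2) * w ^ (D i).card + 1) := by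
    simp_rw [h1, Finset.prod_add, Finset.prod_const_one, mul_one, Finset.prod_mul_distrib]
    rw [Finset.sum_comm, Finset.mul_sum]
    refine Finset.sum_congr rfl fun T hT => ?_
    have hTJ := Finset.mem_powerset.1 hT
    rw [← Finset.mul_sum, sum_prod_indicator T D t
      (fun i hi j hj => hd i (hTJ hi) j (hTJ hj))]
    ring
  rw [h2]
  refine mul_le_mul_of_nonneg_left ?_ (by positivity)
  rw [← Finset.prod_const]
  refine Finset.prod_le_prod (fun i _ => ?_) (fun i hi => ?_)
  · have := pow_le_one₀ (n := (D i).card) hw0 hw1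
    linarith
  · have := pow_le_pow_of_le_one hw0 hw1 (hM i hi)
    linarith

/-! ### Transversal blocks and cyclic matchings

The cyclic matching given by `a : Fin b → Fin q` consists of the `q` pairwise disjoint transversals
`blk (a + i)`, `i : Fin q`. Each transversal lies in exactly `q` of the `q ^ b` cyclic matchings. -/

/-- The transversal of the partition of `Fin (b * q)` into `b` classes of size `q` that picks
element `g j` in the class `j`. -/
def blk {b q : ℕ} (g : Fin b → Fin q) : Finset (Fin (b * q)) :=
  univ.image fun j => finProdFinEquiv (j, g j)

lemma mem_blk {b q : ℕ} {g : Fin b → Fin q} {x : Fin (b * q)} :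
    x ∈ blk g ↔ g (finProdFinEquiv.symm x).1 = (finProdFinEquiv.symm x).2 := by
  obtain ⟨⟨j, y⟩, rfl⟩ := finProdFinEquiv.surjective x
  rw [Equiv.symm_apply_apply]
  simp only [blk, mem_image, mem_univ, true_and, EmbeddingLike.apply_eq_iff_eq, Prod.mk.injEq]
  constructor
  · rintro ⟨i, rfl, h⟩; exact h
  · intro h; exact ⟨j, rfl, h⟩

lemma card_blk {b q : ℕ} (g : Fin b → Fin q) : (blk g).card = b := by
  rw [blk, Finset.card_image_of_injective, Finset.card_univ, Fintype.card_fin]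
  intro i j h
  exact (Prod.mk.injEq _ _ _ _ ▸ finProdFinEquiv.injective h).1

lemma blk_injective {b q : ℕ} : Function.Injective (blk : (Fin b → Fin q) → _) := by
  intro g g' h
  funext j
  have h1 : finProdFinEquiv (j, g j) ∈ blk g' := h ▸ mem_blk.2 (by simp)
  have := mem_blk.1 h1
  simpa using this.symm

lemma disjoint_blk {b q : ℕ} {g g' : Fin b → Fin q} (h : ∀ j, g j ≠ g' j) :
    Disjoint (blk g) (blk g') := by
  rw [Finset.disjoint_left]
  intro x hx hx'
  exact h _ ((mem_blk.1 hx).trans (mem_blk.1 hx').symm)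

/-- In each cyclic matching, a set `S` meets at most `|S|` of the `q` blocks. -/
lemma le_card_disjoint_blk {b q : ℕ} [NeZero q] (S : Finset (Fin (b * q))) (a : Fin b → Fin q) :
    q - S.card ≤ (univ.filter fun i : Fin q => Disjoint S (blk fun j => a j + i)).card := by
  have h1 := Finset.card_filter_add_card_filter_not (s := (univ : Finset (Fin q)))
    (fun i : Fin q => Disjoint S (blk fun j => a j + i))
  have h2 : (univ.filter fun i : Fin q => ¬ Disjoint S (blk fun j => a j + i)).card ≤ S.card := by
    refine (Finset.card_le_card ?_).trans (Finset.card_image_le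
      (f := fun s => (finProdFinEquiv.symm s).2 - a (finProdFinEquiv.symm s).1))
    intro i hi
    obtain ⟨x, hx, hx'⟩ := Finset.not_disjoint_iff.1 (Finset.mem_filter.1 hi).2
    exact Finset.mem_image.2 ⟨x, hx, by rw [← mem_blk.1 hx']; simp⟩
  rw [Finset.card_univ, Fintype.card_fin] at h1
  omega

/-- Averaging over the cyclic matchings: if every cyclic matching contains at least `q / L` blocks
with property `P`, then at least `q ^ b / L` transversals have property `P`. -/
lemma pow_le_of_matchings {b q L : ℕ} [NeZero q] (P : (Fin b → Fin q) → Prop) [DecidablePred P]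
    (h : ∀ a : Fin b → Fin q, q ≤ L * (univ.filter fun i : Fin q => P fun j => a j + i).card) :
    q ^ b ≤ L * (univ.filter P).card := by
  have h1 : ∑ a : Fin b → Fin q, (univ.filter fun i : Fin q => P fun j => a j + i).card =
      q * (univ.filter P).card := by
    simp_rw [Finset.card_filter]
    rw [Finset.sum_comm]
    have : ∀ i : Fin q, ∑ a : Fin b → Fin q, (if P (fun j => a j + i) then 1 else 0) =
        ∑ g : Fin b → Fin q, if P g then 1 else 0 := fun i =>
      Fintype.sum_equiv (Equiv.addRight (fun _ => i)) _ _ (fun a => rfl)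
    simp_rw [this]
    simp
  have h2 : ∑ _a : Fin b → Fin q, q ≤
      ∑ a : Fin b → Fin q, L * (univ.filter fun i : Fin q => P fun j => a j + i).card :=
    Finset.sum_le_sum fun a _ => h a
  rw [← Finset.mul_sum, h1] at h2
  simp only [Finset.sum_const, Finset.card_univ, Fintype.card_fun, Fintype.card_fin,
    smul_eq_mul] at h2
  have hq : 0 < q := Nat.pos_of_ne_zero (NeZero.ne q)
  refine Nat.le_of_mul_le_mul_left ?_ hq
  linarith [h2]

/-! ### A colouring that is good for all `ℓ`-sets simultaneously -/

/-- The subsets of `S ∪ B` that are not contained in `S`. For disjoint sets `B` these families are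
disjoint, which makes the corresponding events about a random colouring independent. -/
def newSets {α : Type*} [DecidableEq α] (S B : Finset α) : Finset (Finset α) :=
  (S ∪ B).powerset.filter fun X => ¬ X ⊆ S

lemma disjoint_newSets {α : Type*} [DecidableEq α] {S B B' : Finset α} (h : Disjoint B B') :
    Disjoint (newSets S B) (newSets S B') := by
  rw [Finset.disjoint_left]
  intro X hX hX'
  simp only [newSets, mem_filter, mem_powerset] at hX hX'
  refine hX.2 fun x hx => ?_
  rcases Finset.mem_union.1 (hX.1 hx) with h1 | h1
  · exact h1
  · rcases Finset.mem_union.1 (hX'.1 hx) with h2 | h2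
    · exact h2
    · exact absurd h2 (Finset.disjoint_left.1 h h1)

lemma card_newSets_le {α : Type*} [DecidableEq α] (S B : Finset α) :
    (newSets S B).card ≤ 2 ^ (S.card + B.card) :=
  (Finset.card_filter_le _ _).trans <| by
    rw [Finset.card_powerset]
    exact Nat.pow_le_pow_right (by norm_num) (Finset.card_union_le _ _)

/-- For `ρ ^ L < 1 / 2`, the `L`-th power of (polynomial in `q`) `* ρ ^ (q - ℓ)` is eventually
smaller than `2 ^ (-q)`. -/
lemma eventually_poly_pow_lt (A ρ : ℝ) (hρ : 0 < ρ) (ℓ m L : ℕ)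
    (hL : ρ ^ L < 1 / 2) :
    ∀ᶠ q : ℕ in atTop, (A * (q : ℝ) ^ m * ρ ^ (q - ℓ)) ^ L < (1 / 2 : ℝ) ^ q := by
  have h1 := tendsto_pow_const_mul_const_pow_of_abs_lt_one (m * L) (r := 2 * ρ ^ L)
    (by rw [abs_of_pos (by positivity)]; linarith)
  have h2 := (h1.const_mul ((A / ρ ^ ℓ) ^ L))
  rw [mul_zero] at h2
  filter_upwards [h2.eventually (gt_mem_nhds one_pos), eventually_ge_atTop ℓ] with q hq hqℓ
  have e1 : ρ ^ (q - ℓ) = ρ ^ q / ρ ^ ℓ := by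
    rw [eq_div_iff (by positivity), ← pow_add, Nat.sub_add_cancel hqℓ]
  have e2 : (A * (q : ℝ) ^ m * ρ ^ (q - ℓ)) ^ L =
      ((A / ρ ^ ℓ) ^ L * ((q : ℝ) ^ (m * L) * (2 * ρ ^ L) ^ q)) * (1 / 2 : ℝ) ^ q := by
    rw [e1, mul_pow 2, ← pow_mul, mul_comm L q, pow_mul ρ q L]
    have : (2 : ℝ) ^ q * (1 / 2) ^ q = 1 := by rw [← mul_pow]; norm_num
    have e3 : (A * (q : ℝ) ^ m * (ρ ^ q / ρ ^ ℓ)) ^ L =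
      (A / ρ ^ ℓ) ^ L * ((q : ℝ) ^ (m * L) * (ρ ^ q) ^ L) := by
      rw [pow_mul, ← mul_pow, ← mul_pow]; ring
    rw [e3]
    linear_combination (-(A / ρ ^ ℓ) ^ L * ((q : ℝ) ^ (m * L) * (ρ ^ q) ^ L)) * this
  rw [e2]
  have : (0 : ℝ) < (1 / 2) ^ q := by positivity
  nlinarith

/-- For large `q`, some colouring `φ` realises, for every `ℓ`-set `S`, every prescribed target
`t S · κ` and every cyclic matching, the target on a positive proportion of the blocks. -/
lemma exists_good_coloring (K : Type*) [Fintype K] [DecidableEq K] [Nonempty K] (b ℓ : ℕ) :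
    ∃ L : ℕ, ∀ᶠ q : ℕ in atTop, ∀ [NeZero q],
      ∀ t : Finset (Fin (b * q)) → Finset (Fin (b * q)) → K → Finset (Fin (b * q)) → K,
      ∃ φ : Finset (Fin (b * q)) → K, ∀ S : Finset (Fin (b * q)), S.card = ℓ →
        ∀ (κ : K) (a : Fin b → Fin q),
          q ≤ L * (univ.filter fun i : Fin q => Disjoint S (blk fun j => a j + i) ∧
            ∀ X ∈ newSets S (blk fun j => a j + i),
              φ X = t S (blk fun j => a j + i) κ X).card := by
  have hK : (1 : ℝ) ≤ Fintype.card K := by exact_mod_cast Fintype.card_pos (α := K)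
  set w := 1 / (Fintype.card K : ℝ) with hw
  have hw0 : 0 < w := by positivity
  have hw1 : w ≤ 1 := by rw [hw, div_le_one (by linarith)]; exact hK
  set M := 2 ^ (ℓ + b) with hM
  set ρ := 1 - w ^ M / 2 with hρ
  have hwM0 : 0 < w ^ M := by positivity
  have hwM1 : w ^ M ≤ 1 := pow_le_one₀ hw0.le hw1
  have hρ0 : 0 < ρ := by rw [hρ]; linarith
  have hρ1 : ρ < 1 := by rw [hρ]; linarith
  obtain ⟨L, hL⟩ := exists_pow_lt_of_lt_one (show (0 : ℝ) < 1 / 2 by norm_num) hρ1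
  refine ⟨L, ?_⟩
  filter_upwards [eventually_poly_pow_lt ((Fintype.card K : ℝ) * (b : ℝ) ^ ℓ) ρ
    hρ0 ℓ (ℓ + b) L hL] with q hq
  intro _ t
  let cnt : (Finset (Fin (b * q)) → K) → Finset (Fin (b * q)) × K × (Fin b → Fin q) → ℕ :=
    fun φ p => (univ.filter fun i : Fin q => Disjoint p.1 (blk fun j => p.2.2 j + i) ∧
            ∀ X ∈ newSets p.1 (blk fun j => p.2.2 j + i),
              φ X = t p.1 (blk fun j => p.2.2 j + i) p.2.1 X).card
  let Q : Finset (Finset (Fin (b * q)) × K × (Fin b → Fin q)) := powersetCard ℓ univ ×ˢ univ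
  let N : ℝ := (Fintype.card K : ℝ) ^ Fintype.card (Finset (Fin (b * q)))
  have h1 : ∀ p ∈ Q, ∑ φ, (1 / 2 : ℝ) ^ cnt φ p ≤ N * ρ ^ (q - ℓ) := by
    intro p hp
    have hp1 : p.1.card = ℓ := (mem_powersetCard.1 (mem_product.1 hp).1).2
    have := sum_half_pow_le (univ.filter fun i : Fin q => Disjoint p.1 (blk fun j => p.2.2 j + i))
      (fun i => newSets p.1 (blk fun j => p.2.2 j + i))
      (fun i => t p.1 (blk fun j => p.2.2 j + i) p.2.1)
      (fun i _ i' _ h => disjoint_newSets (disjoint_blk fun j hj => h (add_left_cancel hj)))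
      M (fun i _ => (card_newSets_le _ _).trans (by rw [hp1, card_blk]))
    simp only [Finset.filter_filter] at this
    refine this.trans (mul_le_mul_of_nonneg_left ?_ (by positivity))
    refine pow_le_pow_of_le_one hρ0.le hρ1.le ?_
    rw [← hp1]
    exact le_card_disjoint_blk _ _
  have hQ : (Q.card : ℝ) ≤ (Fintype.card K : ℝ) * (b : ℝ) ^ ℓ * (q : ℝ) ^ (ℓ + b) := by
    have : Q.card = (b * q).choose ℓ * (Fintype.card K * q ^ b) := by
      simp [Q, Finset.card_product]
    rw [this]
    have h2 : (b * q).choose ℓ ≤ (b * q) ^ ℓ := Nat.choose_le_pow _ _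
    have h3 : (((b * q).choose ℓ : ℕ) : ℝ) ≤ (b * q : ℝ) ^ ℓ := by exact_mod_cast h2
    push_cast
    calc _ ≤ (b * q : ℝ) ^ ℓ * (Fintype.card K * (q : ℝ) ^ b) :=
          mul_le_mul_of_nonneg_right h3 (by positivity)
      _ = _ := by rw [mul_pow, pow_add]; ring
  set ε := (Fintype.card K : ℝ) * (b : ℝ) ^ ℓ * (q : ℝ) ^ (ℓ + b) * ρ ^ (q - ℓ) with hε
  have h2 : ∑ φ, ∑ p ∈ Q, (1 / 2 : ℝ) ^ cnt φ p ≤ ∑ _φ : Finset (Fin (b * q)) → K, ε := by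
    rw [Finset.sum_comm]
    refine (Finset.sum_le_sum h1).trans ?_
    rw [Finset.sum_const, Finset.sum_const, nsmul_eq_mul, nsmul_eq_mul, Finset.card_univ,
      Fintype.card_fun]
    push_cast
    have : (Q.card : ℝ) * (N * ρ ^ (q - ℓ)) ≤
        ((Fintype.card K : ℝ) * (b : ℝ) ^ ℓ * (q : ℝ) ^ (ℓ + b)) * (N * ρ ^ (q - ℓ)) :=
      mul_le_mul_of_nonneg_right hQ (by positivity)
    refine this.trans (le_of_eq ?_)
    rw [hε]; ring
  obtain ⟨φ, -, hφ⟩ := Finset.exists_le_of_sum_le Finset.univ_nonempty h2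
  refine ⟨φ, fun S hS κ a => ?_⟩
  have hp : (S, κ, a) ∈ Q := by simp [Q, mem_powersetCard, hS]
  have h3 : (1 / 2 : ℝ) ^ cnt φ (S, κ, a) ≤ ε :=
    (Finset.single_le_sum (f := fun p => (1 / 2 : ℝ) ^ cnt φ p)
      (fun _ _ => by positivity) hp).trans hφ
  have h4 : (1 / 2 : ℝ) ^ (L * cnt φ (S, κ, a)) < (1 / 2 : ℝ) ^ q := by
    rw [mul_comm, pow_mul]
    exact (pow_le_pow_left₀ (by positivity) h3 L).trans_lt hq
  exact ((pow_lt_pow_iff_right_of_lt_one₀ (by norm_num) (by norm_num)).1 h4).le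

/-! ### From random colourings to the Turán density -/

/-- Let `H n φ` be `k`-graphs on `Fin n` depending on a colouring `φ` of the subsets of `Fin n` with
a fixed finite set of colours. Assume that for disjoint `S`, `B` with `|S| = ℓ`, `|S ∪ B| = k`,
whatever the colour of `S` is, the subsets of `S ∪ B` not inside `S` can be coloured so that `S ∪ B`
is forced to be an edge. Then a `k`-graph of vanishing `ℓ`-degree Turán density is contained in
some `H n φ`, since suitable `φ` make the minimum `ℓ`-degree of `H n φ` of order `n ^ (k - ℓ)`. -/
theorem exists_copy_of_forceable {α : Type*} [DecidableEq α] {k ℓ : ℕ} (hℓk : ℓ < k)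
    (V : Finset α) (E : Finset (Finset α)) (h0 : HasTuranDensity k ℓ V E 0)
    {K : Type*} [Fintype K] [DecidableEq K] [Nonempty K]
    (H : ∀ n, (Finset (Fin n) → K) → Finset (Finset (Fin n)))
    (hH : ∀ n φ, ∀ e ∈ H n φ, e.card = k)
    (hT : ∀ (n : ℕ) (S B : Finset (Fin n)) (κ : K), S.card = ℓ → B.card = k - ℓ → Disjoint S B →
      ∃ t : Finset (Fin n) → K, ∀ φ : Finset (Fin n) → K, φ S = κ →
        (∀ X ⊆ S ∪ B, ¬ X ⊆ S → φ X = t X) → S ∪ B ∈ H n φ) :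
    ∃ n φ, ContainsCopy V E (univ : Finset (Fin n)) (H n φ) := by
  classical
  by_contra! hno
  set b := k - ℓ with hb
  have hb0 : 0 < b := by omega
  obtain ⟨L, hL⟩ := exists_good_coloring K b ℓ
  -- the colourings give `ex_ℓ(bq, F) ≥ q ^ b / L`
  have key : ∀ᶠ q : ℕ in atTop, q ^ b ≤ L * exDeg k ℓ (b * q) V E := by
    filter_upwards [hL, eventually_ge_atTop (max ℓ 1)] with q hq hqℓ
    have : NeZero q := ⟨by have := le_max_right ℓ 1; omega⟩
    have hT' : ∀ (S B : Finset (Fin (b * q))) (κ : K), ∃ t : Finset (Fin (b * q)) → K,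
        S.card = ℓ → B.card = b → Disjoint S B → ∀ φ : Finset (Fin (b * q)) → K, φ S = κ →
        (∀ X ⊆ S ∪ B, ¬ X ⊆ S → φ X = t X) → S ∪ B ∈ H (b * q) φ := by
      intro S B κ
      by_cases h : S.card = ℓ ∧ B.card = b ∧ Disjoint S B
      · obtain ⟨t, ht⟩ := hT _ S B κ h.1 h.2.1 h.2.2
        exact ⟨t, fun _ _ _ => ht⟩
      · exact ⟨fun _ => Classical.arbitrary K, fun h1 h2 h3 => absurd ⟨h1, h2, h3⟩ h⟩
    choose t ht using hT'
    obtain ⟨φ, hφ⟩ := hq t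
    have hdeg : ∀ S : Finset (Fin (b * q)), S.card = ℓ → q ^ b ≤ L * degS (H (b * q) φ) S := by
      intro S hS
      refine (pow_le_of_matchings (L := L)
        (fun g => Disjoint S (blk g) ∧ S ∪ blk g ∈ H (b * q) φ) fun a => ?_).trans ?_
      · refine (hφ S hS (φ S) a).trans (Nat.mul_le_mul_left _ (Finset.card_le_card ?_))
        intro i hi
        simp only [mem_filter, mem_univ, true_and] at hi ⊢
        refine ⟨hi.1, ht S _ (φ S) hS (card_blk _) hi.1 φ rfl fun X hX hXS => hi.2 X ?_⟩
        exact mem_filter.2 ⟨mem_powerset.2 hX, hXS⟩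
      · refine Nat.mul_le_mul_left _ (Finset.card_le_card_of_injOn (fun g => S ∪ blk g) ?_ ?_)
        · intro g hg
          simp only [coe_filter, mem_univ, true_and, Set.mem_ofPred_eq] at hg ⊢
          exact ⟨hg.2, Finset.subset_union_left⟩
        · intro g hg g' hg' h
          simp only [coe_filter, mem_univ, true_and, Set.mem_ofPred_eq] at hg hg'
          refine blk_injective ?_
          have h1 := Finset.union_sdiff_cancel_left hg.1
          have h2 := Finset.union_sdiff_cancel_left hg'.1
          simp only at h
          rw [← h1, ← h2, h]
    have hmin : q ^ b ≤ L * minDeg ℓ univ (H (b * q) φ) := by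
      have hne : {d | ∃ S ⊆ (univ : Finset (Fin (b * q))), S.card = ℓ ∧
          d = degS (H (b * q) φ) S}.Nonempty := by
        have hcard : ℓ ≤ (univ : Finset (Fin (b * q))).card := by
          rw [Finset.card_univ, Fintype.card_fin]
          have := le_max_left ℓ 1
          nlinarith
        obtain ⟨S, hS, hSc⟩ := Finset.exists_subset_card_eq hcard
        exact ⟨_, S, hS, hSc, rfl⟩
      obtain ⟨S, -, hS, hd⟩ := Nat.sInf_mem hne
      rw [minDeg, hd]
      exact hdeg S hS
    refine hmin.trans (Nat.mul_le_mul_left _ (le_csSup ?_ ?_))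
    · refine Set.Finite.bddAbove (Set.Finite.subset
        (Set.finite_range fun E' : Finset (Finset (Fin (b * q))) => minDeg ℓ univ E') ?_)
      rintro d ⟨E', -, -, rfl⟩
      exact ⟨E', rfl⟩
    · exact ⟨_, hH _ φ, hno _ φ, rfl⟩
  have hlim : Tendsto (fun q : ℕ => (exDeg k ℓ (b * q) V E : ℝ) /
      ((b * q - ℓ).choose (k - ℓ) : ℝ)) atTop (nhds 0) :=
    h0.comp (tendsto_id.const_mul_atTop' hb0)
  have hpos : (0 : ℝ) < 1 / (((L : ℝ) + 1) * (b : ℝ) ^ b) := by positivity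
  obtain ⟨q, h1, h2, h3⟩ := ((hlim.eventually (gt_mem_nhds hpos)).and
    (key.and (eventually_ge_atTop k))).exists
  -- here `k ≤ q` only ensures that the binomial coefficient is nonzero
  have hbq : b ≤ b * q - ℓ := by
    have : q ≤ b * q := Nat.le_mul_of_pos_left q hb0
    omega
  have hc0 : (0 : ℝ) < ((b * q - ℓ).choose (k - ℓ) : ℝ) := by
    exact_mod_cast Nat.choose_pos hbq
  have hc1 : ((b * q - ℓ).choose (k - ℓ) : ℝ) ≤ (b : ℝ) ^ b * (q : ℝ) ^ b := by
    have : (b * q - ℓ).choose b ≤ (b * q) ^ b :=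
      (Nat.choose_le_pow _ _).trans (Nat.pow_le_pow_left (Nat.sub_le _ _) _)
    rw [← mul_pow]
    exact_mod_cast this
  have h2' : (q : ℝ) ^ b ≤ L * (exDeg k ℓ (b * q) V E : ℝ) := by exact_mod_cast h2
  rw [div_lt_div_iff₀ hc0 (by positivity)] at h1
  have hbb : (0 : ℝ) < (b : ℝ) ^ b := by positivity
  have hx : (0 : ℝ) ≤ (exDeg k ℓ (b * q) V E : ℝ) := by positivity
  nlinarith [mul_le_mul_of_nonneg_left h2' hbb.le, mul_nonneg hx hbb.le]

/-! ### Ranks -/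

lemma rankIn_le_iff {α : Type*} {T : Finset α} {σ : α → ℕ} {x y : α} (hy : y ∈ T) :
    rankIn T σ y ≤ rankIn T σ x ↔ σ y ≤ σ x := by
  constructor
  · intro h
    by_contra! hlt
    refine absurd h (not_le.2 (Finset.card_lt_card ?_))
    rw [Finset.ssubset_iff_of_subset]
    · exact ⟨y, by simp [hy], by simp [hlt]⟩
    · intro z hz
      rw [mem_filter] at hz ⊢
      exact ⟨hz.1, hz.2.trans hlt.le⟩
  · intro h
    refine Finset.card_le_card fun z hz => ?_
    rw [mem_filter] at hz ⊢
    exact ⟨hz.1, hz.2.trans h⟩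

lemma rankIn_le_card {α : Type*} (T : Finset α) (σ : α → ℕ) (x : α) : rankIn T σ x ≤ T.card :=
  Finset.card_filter_le _ _

lemma rankIn_injOn {α : Type*} {T : Finset α} {σ : α → ℕ} (hσ : Set.InjOn σ T) :
    Set.InjOn (rankIn T σ) T := fun _ hx _ hy h =>
  hσ hx hy (le_antisymm ((rankIn_le_iff hx).1 h.le) ((rankIn_le_iff hy).1 h.ge))

lemma rankIn_image {α β : Type*} [DecidableEq β] {e : Finset α} {f : α → β}
    (hf : Set.InjOn f e) {σ : α → ℕ} {τ : β → ℕ} {x : α}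
    (h : ∀ y ∈ e, τ (f y) ≤ τ (f x) ↔ σ y ≤ σ x) :
    rankIn (e.image f) τ (f x) = rankIn e σ x := by
  unfold rankIn
  rw [Finset.filter_image, Finset.card_image_of_injOn
    (hf.mono (by exact_mod_cast Finset.filter_subset _ _))]
  exact congrArg _ (Finset.filter_congr h)

lemma isOrdering_rankIn {α : Type*} {V : Finset α} {σ : α → ℕ} (hσ : Set.InjOn σ V) :
    IsOrdering V (rankIn V σ) := by
  classical
  have hmaps : ∀ x ∈ V, rankIn V σ x ∈ Finset.Icc 1 V.card := fun x hx =>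
    Finset.mem_Icc.2 ⟨Finset.card_pos.2 ⟨x, by simp [hx]⟩, rankIn_le_card _ _ _⟩
  have himg : V.image (rankIn V σ) = Finset.Icc 1 V.card := by
    refine Finset.eq_of_subset_of_card_le (Finset.image_subset_iff.2 hmaps) ?_
    rw [Finset.card_image_of_injOn (rankIn_injOn hσ)]
    simp
  refine ⟨fun x hx => by simpa using hmaps x hx, rankIn_injOn hσ, fun i hi => ?_⟩
  have : i ∈ V.image (rankIn V σ) := himg ▸ by simpa using hi
  simpa using this

/-! ### The vanishing order -/

/-- The `k`-graph on `Fin n` of all `e` such that `φ` sends every `j`-subset of `e` to the set of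
positions it occupies in `e`, in the natural order of `Fin n`. Positions lie in `{1, …, k}` and are
encoded in `Fin (k + 1)`. -/
def positionGraph (k j n : ℕ) (φ : Finset (Fin n) → Finset (Fin (k + 1))) :
    Finset (Finset (Fin n)) :=
  univ.filter fun e => e.card = k ∧ ∀ X ⊆ e, X.card = j →
    (φ X).image Fin.val = X.image (rankIn e Fin.val)

lemma exists_vanishingOrder {α : Type*} [DecidableEq α] {k ℓ : ℕ} (hℓk : ℓ < k)
    {V : Finset α} {E : Finset (Finset α)} (hF : IsKGraph k V E)
    (h0 : HasTuranDensity k ℓ V E 0) : ∃ σ : α → ℕ, IsVanishingOrder (ℓ + 1) V E σ := by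
  obtain ⟨n, φ, f, hf, -, hfE⟩ := exists_copy_of_forceable hℓk V E h0 (positionGraph k (ℓ + 1))
    (fun n φ e he => (mem_filter.1 he).2.1) (by
      intro n S B _ hS hB hSB
      refine ⟨fun X => univ.filter fun i => i.val ∈ X.image (rankIn (S ∪ B) Fin.val),
        fun φ _ hφ => ?_⟩
      have hcard : (S ∪ B).card = k := by
        rw [Finset.card_union_of_disjoint hSB, hS, hB]; omega
      refine mem_filter.2 ⟨mem_univ _, hcard, fun X hX hXc => ?_⟩
      rw [hφ X hX fun h => by have := Finset.card_le_card h; omega]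
      ext i
      simp only [mem_image, mem_filter, mem_univ, true_and]
      constructor
      · rintro ⟨j, hj, rfl⟩; exact hj
      · rintro ⟨x, hx, rfl⟩
        exact ⟨⟨rankIn (S ∪ B) Fin.val x,
          Nat.lt_succ_of_le (hcard ▸ rankIn_le_card _ _ _)⟩, ⟨x, hx, rfl⟩, rfl⟩)
  have hfv : Set.InjOn (fun v => (f v).val) V := fun x hx y hy h => hf hx hy (Fin.ext h)
  refine ⟨rankIn V fun v => (f v).val, isOrdering_rankIn hfv,
    fun X => (φ (X.image f)).image Fin.val, fun e he X hX hXc => ?_⟩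
  have heV := (hF e he).1
  have hfe : Set.InjOn f e := hf.mono (by exact_mod_cast heV)
  have h1 := (mem_filter.1 (hfE e he)).2.2 (X.image f) (Finset.image_subset_image hX)
    (by rw [Finset.card_image_of_injOn (hfe.mono (by exact_mod_cast hX)), hXc])
  simp only
  rw [h1, Finset.image_image]
  refine Finset.image_congr fun x _ => ?_
  exact rankIn_image hfe fun y hy => (rankIn_le_iff (σ := fun v => (f v).val) (heV hy)).symm

/-! ### Partite links -/

/-- The class of `v` in the partition attached to the set `T`: it is read off from the colour of
`insert v T`, a function of the position of the distinguished vertex `v` in `insert v T`. -/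
def linkClass {k b n : ℕ} (φ : Finset (Fin n) → Fin (k + 1) → Fin b)
    (T : Finset (Fin n)) (v : Fin n) : Fin b :=
  φ (insert v T) (Fin.ofNat (k + 1) (rankIn (insert v T) Fin.val v))

/-- The `k`-graph on `Fin n` of all `e` such that, for every `j`-subset `T` of `e`, the vertices of
`e \ T` lie in different classes of the partition attached to `T`. -/
def partiteLinkGraph (k j b n : ℕ) (φ : Finset (Fin n) → Fin (k + 1) → Fin b) :
    Finset (Finset (Fin n)) :=
  open Classical in univ.filter fun e => e.card = k ∧ ∀ T ⊆ e, T.card = j →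
    Set.InjOn (linkClass φ T) ↑(e \ T)

/-- Arbitrary families of functions `β T` are realised as classes of a single colouring. -/
lemma exists_linkClass_eq {k b n : ℕ} [NeZero b] (β : Finset (Fin n) → Fin n → Fin b) :
    ∃ t : Finset (Fin n) → Fin (k + 1) → Fin b, ∀ (T : Finset (Fin n)) (v : Fin n),
      v ∉ T → T.card < k → linkClass t T v = β T v := by
  classical
  refine ⟨fun X r => if h : ∃ v ∈ X, Fin.ofNat (k + 1) (rankIn X Fin.val v) = r then
    β (X.erase h.choose) h.choose else 0, fun T v hv hT => ?_⟩
  have hex : ∃ u ∈ insert v T, Fin.ofNat (k + 1) (rankIn (insert v T) Fin.val u) =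
      Fin.ofNat (k + 1) (rankIn (insert v T) Fin.val v) := ⟨v, by simp, rfl⟩
  have hc : (insert v T).card < k + 1 := by
    rw [Finset.card_insert_of_notMem hv]; omega
  have hu : hex.choose = v := by
    obtain ⟨h1, h2⟩ := hex.choose_spec
    refine rankIn_injOn (Fin.val_injective.injOn) h1 (by simp) ?_
    have h3 := congrArg Fin.val h2
    simp only [Fin.val_ofNat] at h3
    rwa [Nat.mod_eq_of_lt ((rankIn_le_card _ _ _).trans_lt hc),
      Nat.mod_eq_of_lt ((rankIn_le_card _ _ _).trans_lt hc)] at h3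
  rw [linkClass, dif_pos hex, hu, Finset.erase_insert hv]

/-- A set of size `b` can be labelled injectively by `Fin b` with one label prescribed. -/
lemma exists_injOn_extend {γ : Type*} {b : ℕ} [NeZero b] (W : Finset γ) (hW : W.card = b)
    (p : γ → Prop) (hp : ∀ v ∈ W, ∀ v' ∈ W, p v → p v' → v = v') (c : γ → Fin b) :
    ∃ β : γ → Fin b, Set.InjOn β W ∧ ∀ v ∈ W, p v → β v = c v := by
  classical
  let e := Finset.equivFinOfCardEq hW
  let β₀ : γ → Fin b := fun v => if h : v ∈ W then e ⟨v, h⟩ else 0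
  have hβ₀ : Set.InjOn β₀ W := by
    intro x hx y hy h
    simp only [β₀, dif_pos (Finset.mem_coe.1 hx), dif_pos (Finset.mem_coe.1 hy)] at h
    exact congrArg Subtype.val (e.injective h)
  by_cases h : ∃ v ∈ W, p v
  · obtain ⟨v, hv, hpv⟩ := h
    refine ⟨fun x => Equiv.swap (β₀ v) (c v) (β₀ x),
      fun x hx y hy hxy => hβ₀ hx hy (Equiv.injective _ hxy), fun x hx hpx => ?_⟩
    rw [hp x hx v hv hpx hpv]
    exact Equiv.swap_apply_left _ _
  · exact ⟨β₀, hβ₀, fun v hv hpv => absurd ⟨v, hv, hpv⟩ h⟩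

lemma isPartite_link {α : Type*} [DecidableEq α] {k ℓ : ℕ} (hℓ : 1 ≤ ℓ) (hℓk : ℓ < k)
    {V : Finset α} {E : Finset (Finset α)} (hF : IsKGraph k V E)
    (h0 : HasTuranDensity k ℓ V E 0) (S : Finset α) (hS : S.card = ℓ - 1) :
    IsPartite (k - ℓ + 1) (V \ S) (linkE E S) := by
  classical
  obtain ⟨n, φ, f, hf, -, hfE⟩ := exists_copy_of_forceable hℓk V E h0
    (partiteLinkGraph k (ℓ - 1) (k - ℓ + 1))
    (fun n φ e he => by
      simp only [partiteLinkGraph, mem_filter] at he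
      exact he.2.1) (by
      intro n S B κ hS hB hSB
      have hcard : (S ∪ B).card = k := by
        rw [Finset.card_union_of_disjoint hSB, hS, hB]; omega
      -- for `T ⊆ S` the class of the vertex of `S \ T` is already fixed by the colour of `S`
      have hβ : ∀ T : Finset (Fin n), ∃ β : Fin n → Fin (k - ℓ + 1), T ⊆ S ∪ B → T.card = ℓ - 1 →
          Set.InjOn β ↑((S ∪ B) \ T) ∧ ∀ v ∈ (S ∪ B) \ T, insert v T = S →
            β v = κ (Fin.ofNat (k + 1) (rankIn S Fin.val v)) := by
        intro T
        by_cases hT : T ⊆ S ∪ B ∧ T.card = ℓ - 1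
        · obtain ⟨β, h1, h2⟩ := exists_injOn_extend (b := k - ℓ + 1) ((S ∪ B) \ T)
            (by rw [Finset.card_sdiff_of_subset hT.1, hcard, hT.2]; omega)
            (fun v => insert v T = S)
            (fun v hv v' _ h h' => by
              have : v ∈ insert v' T := by
                rw [h', ← h]; exact Finset.mem_insert_self _ _
              exact (Finset.mem_insert.1 this).resolve_right (Finset.mem_sdiff.1 hv).2)
            (fun v => κ (Fin.ofNat (k + 1) (rankIn S Fin.val v)))
          exact ⟨β, fun _ _ => ⟨h1, h2⟩⟩
        · exact ⟨fun _ => 0, fun h h' => absurd ⟨h, h'⟩ hT⟩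
      choose β hβ using hβ
      obtain ⟨t, ht⟩ := exists_linkClass_eq (k := k) β
      refine ⟨t, fun φ hφS hφ => ?_⟩
      simp only [partiteLinkGraph, mem_filter, mem_univ, true_and]
      refine ⟨hcard, fun T hT hTc => ?_⟩
      obtain ⟨h1, h2⟩ := hβ T hT hTc
      refine h1.congr fun v hv => ?_
      have hv' := Finset.mem_sdiff.1 (Finset.mem_coe.1 hv)
      by_cases hX : insert v T ⊆ S
      · have hXS : insert v T = S := Finset.eq_of_subset_of_card_le hX (by
          rw [Finset.card_insert_of_notMem hv'.2]; omega)
        rw [h2 v hv hXS, linkClass, hXS, hφS]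
      · rw [← ht T v hv'.2 (by omega), linkClass, linkClass,
          hφ _ (Finset.insert_subset hv'.1 hT) hX])
  refine ⟨fun v => linkClass φ (S.image f) (f v), fun e' he' i => ?_⟩
  obtain ⟨e, he, rfl⟩ := Finset.mem_image.1 he'
  obtain ⟨heE, hSe⟩ := Finset.mem_filter.1 he
  have heV := (hF e heE).1
  have hfe : Set.InjOn f e := hf.mono (by exact_mod_cast heV)
  have h1 := hfE e heE
  simp only [partiteLinkGraph, mem_filter, mem_univ, true_and] at h1
  have h2 := h1.2 (S.image f) (Finset.image_subset_image hSe)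
    (by rw [Finset.card_image_of_injOn (hfe.mono (by exact_mod_cast hSe)), hS])
  have hinj : Set.InjOn (fun v => linkClass φ (S.image f) (f v)) ↑(e \ S) := by
    refine Set.InjOn.comp h2 (hfe.mono (by simp)) fun x hx => ?_
    have hx' := Finset.mem_sdiff.1 (Finset.mem_coe.1 hx)
    refine Finset.mem_coe.2 (Finset.mem_sdiff.2 ⟨Finset.mem_image_of_mem f hx'.1, fun h => ?_⟩)
    obtain ⟨s, hs, hsx⟩ := Finset.mem_image.1 h
    exact hx'.2 (hfe (hSe hs) hx'.1 hsx ▸ hs)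
  have himg : (e \ S).image (fun v => linkClass φ (S.image f) (f v)) = univ := by
    refine Finset.eq_univ_of_card _ ?_
    rw [Finset.card_image_of_injOn hinj, Finset.card_sdiff_of_subset hSe, (hF e heE).2, hS,
      Fintype.card_fin]
    omega
  obtain ⟨v, hv, hvi⟩ := Finset.mem_image.1 (himg ▸ Finset.mem_univ i)
  refine Finset.card_eq_one.2 ⟨v, ?_⟩
  ext x
  simp only [mem_filter, Finset.mem_singleton]
  constructor
  · rintro ⟨hx, hxi⟩
    exact hinj hx hv (hxi.trans hvi.symm)
  · rintro rfl
    exact ⟨hv, hvi⟩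

/-- If `k > ℓ ≥ 1` and `F` is a `k`-graph with `π_ℓ(F) = 0`, then (a) `F` has an
`(ℓ+1)`-vanishing order, and (b) the link of every `(ℓ-1)`-set is `(k-ℓ+1)`-partite. -/
theorem stmt_1 {α : Type*} [DecidableEq α] (k ℓ : ℕ) (hℓ : 1 ≤ ℓ) (hℓk : ℓ < k)
    (V : Finset α) (E : Finset (Finset α)) (hF : IsKGraph k V E)
    (h0 : HasTuranDensity k ℓ V E 0) :
    (∃ σ : α → ℕ, IsVanishingOrder (ℓ + 1) V E σ) ∧
    ∀ S ⊆ V, S.card = ℓ - 1 → IsPartite (k - ℓ + 1) (V \ S) (linkE E S) :=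
  ⟨exists_vanishingOrder hℓk hF h0, fun S _ hS => isPartite_link hℓ hℓk hF h0 S hS⟩
end
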